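/- Let ν ≥ 1, let N ⊆ ℝ^ν be a compact connected smooth embedded submanifold without boundary with base point b ∈ N, let m ≥ 2, and let ℓ ∈ {1, …, m−1}. Set p = ℓ + 1 and assume that the homotopy group π_ℓ(N, b) is nontrivial. Then there exists a sequence (u_j) of smooth maps u_j : B̄^{m−1} → N with u_j = b on the sphere S^{m−2}, such that liminf_{j→∞} E^{1−1/p, p}_{B^{m−1}}(u_j) > 0 and such that for every M > 0 there is J with E^{1,p}_ext(u_j) ≥ M · E^{1−1/p, p}_{B^{m−1}}(u_j) for all j ≥ J. -/

import Mathlib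

open Metric Set MeasureTheory Filter
open scoped ENNReal Topology

noncomputable section

/-- `N ⊆ ℝ^ν` is a smooth embedded submanifold without boundary: around each of its points
there is a smooth local diffeomorphism of the ambient space flattening `N` onto a
`d`-dimensional coordinate subspace. -/
def IsSmoothSubmanifold {ν : ℕ} (N : Set (EuclideanSpace ℝ (Fin ν))) : Prop :=
  ∃ d : ℕ, ∀ x ∈ N, ∃ (U V : Set (EuclideanSpace ℝ (Fin ν)))
      (φ ψ : EuclideanSpace ℝ (Fin ν) → EuclideanSpace ℝ (Fin ν)),
    IsOpen U ∧ IsOpen V ∧ x ∈ U ∧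
    ContDiffOn ℝ (⊤ : ℕ∞) φ U ∧ ContDiffOn ℝ (⊤ : ℕ∞) ψ V ∧
    MapsTo φ U V ∧ MapsTo ψ V U ∧
    (∀ y ∈ U, ψ (φ y) = y) ∧ (∀ z ∈ V, φ (ψ z) = z) ∧
    (∀ y ∈ U, (y ∈ N ↔ ∀ i : Fin ν, d ≤ (i : ℕ) → φ y i = 0))

/-- The Gagliardo fractional energy `E^{s,p}_A(u)`. -/
def gagliardoE {l ν : ℕ} (s p : ℝ) (A : Set (EuclideanSpace ℝ (Fin l)))
    (u : EuclideanSpace ℝ (Fin l) → EuclideanSpace ℝ (Fin ν)) : ℝ≥0∞ :=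
  ∫⁻ x in A, ∫⁻ y in A, ENNReal.ofReal (‖u y - u x‖ ^ p / ‖y - x‖ ^ ((l : ℝ) + s * p))

/-- `f` is `C^1` on the closed set `A` in the sense that it is (the restriction of)
a `C^1` map on an open neighborhood of `A`. -/
def C1OnNhd {E F : Type*} [NormedAddCommGroup E] [NormedSpace ℝ E]
    [NormedAddCommGroup F] [NormedSpace ℝ F] (f : E → F) (A : Set E) : Prop :=
  ∃ V : Set E, IsOpen V ∧ A ⊆ V ∧ ContDiffOn ℝ 1 f V

/-- `f` is `C^∞` on the closed set `A` in the sense that it is (the restriction of)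
a smooth map on an open neighborhood of `A`. -/
def SmoothOnNhd {E F : Type*} [NormedAddCommGroup E] [NormedSpace ℝ E]
    [NormedAddCommGroup F] [NormedSpace ℝ F] (f : E → F) (A : Set E) : Prop :=
  ∃ V : Set E, IsOpen V ∧ A ⊆ V ∧ ContDiffOn ℝ (⊤ : ℕ∞) f V

/-- The `C^1` extension `p`-energy `E^{1,p}_ext(u)` of a map `u : B̄^l → N`:
the infimum (in `ℝ≥0∞`, so `sInf ∅ = ∞`) of `∫_{B^l × (0,1)} ‖DU‖^p` over all `C^1` maps
`U : B̄^l × [0,1] → N` with `U(·,0) = u`. -/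
def extEnergy {l ν : ℕ} (p : ℝ) (N : Set (EuclideanSpace ℝ (Fin ν)))
    (u : EuclideanSpace ℝ (Fin l) → EuclideanSpace ℝ (Fin ν)) : ℝ≥0∞ :=
  sInf { e | ∃ U : EuclideanSpace ℝ (Fin l) × ℝ → EuclideanSpace ℝ (Fin ν),
    C1OnNhd U (closedBall 0 1 ×ˢ Icc (0 : ℝ) 1) ∧
    MapsTo U (closedBall 0 1 ×ˢ Icc (0 : ℝ) 1) N ∧
    (∀ x ∈ closedBall (0 : EuclideanSpace ℝ (Fin l)) 1, U (x, 0) = u x) ∧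
    e = ∫⁻ z in ball (0 : EuclideanSpace ℝ (Fin l)) 1 ×ˢ Ioo (0 : ℝ) 1,
          ENNReal.ofReal (‖fderiv ℝ U z‖ ^ p) }

/-- `f` and `g`, mapping `B̄^l` into `N` and agreeing on `S^{l-1}`, are homotopic within `N`
relative to the sphere `S^{l-1}`. -/
def HomotopicRelSphere {l ν : ℕ} (N : Set (EuclideanSpace ℝ (Fin ν)))
    (f g : EuclideanSpace ℝ (Fin l) → EuclideanSpace ℝ (Fin ν)) : Prop :=
  ∃ H : EuclideanSpace ℝ (Fin l) × ℝ → EuclideanSpace ℝ (Fin ν),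
    ContinuousOn H (closedBall 0 1 ×ˢ Icc (0 : ℝ) 1) ∧
    MapsTo H (closedBall 0 1 ×ˢ Icc (0 : ℝ) 1) N ∧
    (∀ x ∈ closedBall (0 : EuclideanSpace ℝ (Fin l)) 1, H (x, 0) = f x ∧ H (x, 1) = g x) ∧
    (∀ x ∈ sphere (0 : EuclideanSpace ℝ (Fin l)) 1, ∀ t ∈ Icc (0 : ℝ) 1, H (x, t) = f x)

/-- The topological `p`-energy `E^{1,p}_top(u)` of `u : B̄^l → N` with `u = b` on `S^{l-1}`:
the infimum (in `ℝ≥0∞`) of `∫_{B^l} ‖Dw‖^p` over all `C^1` maps `w : B̄^l → N` with `w = b` on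
`S^{l-1}` that are homotopic to `u` relative to `S^{l-1}`. -/
def topEnergy {l ν : ℕ} (p : ℝ) (N : Set (EuclideanSpace ℝ (Fin ν)))
    (b : EuclideanSpace ℝ (Fin ν))
    (u : EuclideanSpace ℝ (Fin l) → EuclideanSpace ℝ (Fin ν)) : ℝ≥0∞ :=
  sInf { e | ∃ w : EuclideanSpace ℝ (Fin l) → EuclideanSpace ℝ (Fin ν),
    C1OnNhd w (closedBall 0 1) ∧ MapsTo w (closedBall 0 1) N ∧
    (∀ x ∈ sphere (0 : EuclideanSpace ℝ (Fin l)) 1, w x = b) ∧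
    HomotopicRelSphere N w u ∧
    e = ∫⁻ x in ball (0 : EuclideanSpace ℝ (Fin l)) 1, ENNReal.ofReal (‖fderiv ℝ w x‖ ^ p) }


/-- The set `s` has a neighbourhood carrying a smooth retraction onto `N`. -/
def HasRetr {ν : ℕ} (N s : Set (EuclideanSpace ℝ (Fin ν))) : Prop :=
  ∃ (W : Set (EuclideanSpace ℝ (Fin ν)))
    (ρ : EuclideanSpace ℝ (Fin ν) → EuclideanSpace ℝ (Fin ν)),
    IsOpen W ∧ closure s ⊆ W ∧ ContDiffOn ℝ (⊤ : ℕ∞) ρ W ∧ MapsTo ρ W N ∧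
    ∀ y ∈ W, y ∈ N → ρ y = y

lemma hasRetr_union {ν : ℕ} {N s t : Set (EuclideanSpace ℝ (Fin ν))} (hN : IsClosed N)
    (htN : t ⊆ N) (hs : HasRetr N s) (ht : HasRetr N t) : HasRetr N (s ∪ t) := by
  obtain ⟨W₁, ρ₁, hW₁, hsW, hρ₁, hm₁, hid₁⟩ := hs
  obtain ⟨W₂, ρ₂, hW₂, htW, hρ₂, hm₂, hid₂⟩ := ht
  obtain ⟨O', hO', hsO', hO'W⟩ := normal_exists_closure_subset isClosed_closure hW₁ hsW
  obtain ⟨O, hO, hsO, hOO'⟩ := normal_exists_closure_subset isClosed_closure hO' hsO'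
  obtain ⟨χ, hχ, -, hχ0, hχ1⟩ := exists_contMDiff_zero_iff_one_iff_of_isClosed
    (modelWithCornersSelf ℝ (EuclideanSpace ℝ (Fin ν))) (n := (⊤ : ℕ∞))
    (s := O'ᶜ) (t := closure O) hO'.isClosed_compl isClosed_closure
    (by rw [Set.disjoint_left]; intro x hx hx'; exact hx (hOO' hx'))
  rw [contMDiff_iff_contDiff] at hχ
  set σ : EuclideanSpace ℝ (Fin ν) → EuclideanSpace ℝ (Fin ν) :=
    fun y => χ y • ρ₁ y + (1 - χ y) • ρ₂ y with hσ
  have hσs : ContDiffOn ℝ (⊤ : ℕ∞) σ (W₁ ∩ W₂) :=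
    (hχ.contDiffOn.smul (hρ₁.mono inter_subset_left)).add
      ((contDiff_const.sub hχ).contDiffOn.smul (hρ₂.mono inter_subset_right))
  set T : Set (EuclideanSpace ℝ (Fin ν)) :=
    ((W₁ ∩ W₂) ∩ σ ⁻¹' W₁) ∩ ((W₁ ∩ W₂) ∩ ρ₂ ⁻¹' W₁) with hT
  have hTo : IsOpen T :=
    (hσs.continuousOn.isOpen_inter_preimage (hW₁.inter hW₂) hW₁).inter
      ((hρ₂.continuousOn.mono inter_subset_right).isOpen_inter_preimage (hW₁.inter hW₂) hW₁)
  classical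
  set A : Set (EuclideanSpace ℝ (Fin ν)) := W₂ ∩ (closure O')ᶜ with hA
  have hAo : IsOpen A := hW₂.inter isClosed_closure.isOpen_compl
  set ρ : EuclideanSpace ℝ (Fin ν) → EuclideanSpace ℝ (Fin ν) :=
    fun y => if y ∈ O then ρ₁ y else if y ∈ A then ρ₂ y else ρ₁ (σ y) with hρdef
  have hOW : O ⊆ W₁ := fun x hx => hO'W (subset_closure (hOO' (subset_closure hx)))
  have hρO : ∀ y ∈ O, ρ y = ρ₁ y := fun y hy => by simp [hρdef, hy]
  have hρA : ∀ y ∈ A, ρ y = ρ₂ y := fun y hy => by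
    have : y ∉ O := fun h => hy.2 (subset_closure (hOO' (subset_closure h)))
    simp [hρdef, hy, this]
  have hρT : ∀ y ∈ T, ρ y = ρ₁ (σ y) := fun y hy => by
    by_cases h1 : y ∈ O
    · have hc : χ y = 1 := (hχ1 y).1 (subset_closure h1)
      have hs1 : σ y = ρ₁ y := by simp [hσ, hc]
      rw [hρO y h1, hs1]
      refine (hid₁ _ ?_ (hm₁ hy.1.1.1)).symm
      rw [← hs1]; exact hy.1.2
    · by_cases h2 : y ∈ A
      · have hc : χ y = 0 := (hχ0 y).1 (fun h => h2.2 (subset_closure h))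
        have hs1 : σ y = ρ₂ y := by simp [hσ, hc]
        rw [hρA y h2, hs1]
        exact (hid₁ _ hy.2.2 (hm₂ h2.1)).symm
      · simp [hρdef, h1, h2]
  refine ⟨O ∪ A ∪ T, ρ, (hO.union hAo).union hTo, ?_, ?_, ?_, ?_⟩
  · rw [closure_union]
    rintro x (hx | hx)
    · exact Or.inl (Or.inl (hsO hx))
    · have hx2 := htW hx
      have hxN : x ∈ N := closure_minimal htN hN hx
      by_cases h1 : x ∈ W₁
      · refine Or.inr ?_
        have e1 := hid₁ x h1 hxN
        have e2 := hid₂ x hx2 hxN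
        have e3 : σ x = x := by
          simp only [hσ, e1, e2]; rw [← add_smul]; simp
        refine ⟨⟨⟨h1, hx2⟩, ?_⟩, ⟨⟨h1, hx2⟩, ?_⟩⟩
        · rw [mem_preimage, e3]; exact h1
        · rw [mem_preimage, e2]; exact h1
      · exact Or.inl (Or.inr ⟨hx2, fun h => h1 (hO'W h)⟩)
  · have key : ∀ (B : Set (EuclideanSpace ℝ (Fin ν))) (_ : IsOpen B)
        (k : EuclideanSpace ℝ (Fin ν) → EuclideanSpace ℝ (Fin ν)),
        ContDiffOn ℝ (⊤ : ℕ∞) k B → (∀ y ∈ B, ρ y = k y) → ∀ y ∈ B,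
        ContDiffAt ℝ (⊤ : ℕ∞) ρ y := by
      intro B hB k hk he y hy
      refine (hk.contDiffAt (hB.mem_nhds hy)).congr_of_eventuallyEq ?_
      filter_upwards [hB.mem_nhds hy] with z hz using he z hz
    rintro y ((hy | hy) | hy)
    · exact (key O hO ρ₁ (hρ₁.mono hOW) hρO y hy).contDiffWithinAt
    · exact (key A hAo ρ₂ (hρ₂.mono inter_subset_left) hρA y hy).contDiffWithinAt
    · refine (key T hTo (fun y => ρ₁ (σ y)) ?_ hρT y hy).contDiffWithinAt
      exact hρ₁.comp (hσs.mono (fun z hz => hz.1.1)) (fun z hz => hz.1.2)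
  · rintro y ((hy | hy) | hy)
    · rw [hρO y hy]; exact hm₁ (hOW hy)
    · rw [hρA y hy]; exact hm₂ hy.1
    · rw [hρT y hy]; exact hm₁ hy.1.2
  · rintro y ((hy | hy) | hy) hyN
    · rw [hρO y hy]; exact hid₁ _ (hOW hy) hyN
    · rw [hρA y hy]; exact hid₂ _ hy.1 hyN
    · rw [hρT y hy]
      have e1 := hid₁ y hy.1.1.1 hyN
      have e2 := hid₂ y hy.1.1.2 hyN
      have e3 : σ y = y := by
        simp only [hσ, e1, e2]; rw [← add_smul]; simp
      rw [e3, e1]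

/-- Projection onto the first `d` coordinates. -/
def truncL {ν : ℕ} (d : ℕ) : EuclideanSpace ℝ (Fin ν) →L[ℝ] EuclideanSpace ℝ (Fin ν) :=
  LinearMap.toContinuousLinearMap
    { toFun := fun x => WithLp.toLp 2 (fun i : Fin ν => if d ≤ (i : ℕ) then 0 else x i)
      map_add' := by intro x y; ext i; simp only [PiLp.add_apply]; split_ifs <;> simp
      map_smul' := by
        intro c x; ext i; simp only [PiLp.smul_apply, RingHom.id_apply]; split_ifs <;> simp }

lemma truncL_apply {ν : ℕ} (d : ℕ) (x : EuclideanSpace ℝ (Fin ν)) (i : Fin ν) :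
    truncL d x i = if d ≤ (i : ℕ) then 0 else x i := rfl

lemma truncL_eq {ν : ℕ} (d : ℕ) (x : EuclideanSpace ℝ (Fin ν))
    (h : ∀ i : Fin ν, d ≤ (i : ℕ) → x i = 0) : truncL d x = x := by
  ext i
  rw [truncL_apply]
  split_ifs with h1
  · exact (h i h1).symm
  · rfl

lemma exists_retraction {ν : ℕ} {N : Set (EuclideanSpace ℝ (Fin ν))}
    (hN : IsCompact N) (hsub : IsSmoothSubmanifold N) :
    ∃ (W : Set (EuclideanSpace ℝ (Fin ν)))
      (ρ : EuclideanSpace ℝ (Fin ν) → EuclideanSpace ℝ (Fin ν)),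
      IsOpen W ∧ N ⊆ W ∧ ContDiffOn ℝ (⊤ : ℕ∞) ρ W ∧ MapsTo ρ W N ∧ ∀ y ∈ N, ρ y = y := by
  obtain ⟨d, hd⟩ := hsub
  have main : HasRetr N (N ∩ N) := by
    refine hN.induction_on (p := fun s => HasRetr N (s ∩ N)) ?_ ?_ ?_ ?_
    · exact ⟨∅, id, isOpen_empty, by simp, contDiffOn_empty, by simp [MapsTo], by simp⟩
    · rintro s t hst ⟨W, ρ, h1, h2, h3⟩
      exact ⟨W, ρ, h1, (closure_mono (inter_subset_inter_left _ hst)).trans h2, h3⟩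
    · intro s t hs ht
      rw [union_inter_distrib_right]
      exact hasRetr_union hN.isClosed inter_subset_right hs ht
    · intro x hx
      obtain ⟨U, V, φ, ψ, hU, hV, hxU, hφ, hψ, hmφ, hmψ, hψφ, hφψ, hiff⟩ := hd x hx
      have hcont : ContDiffOn ℝ (⊤ : ℕ∞) (fun y => truncL d (φ y)) U :=
        (truncL d).contDiff.comp_contDiffOn hφ
      set U₀ := U ∩ (fun y => truncL d (φ y)) ⁻¹' V with hU₀
      have hU₀o : IsOpen U₀ := hcont.continuousOn.isOpen_inter_preimage hU hV
      have hfix : ∀ y ∈ U, y ∈ N → truncL d (φ y) = φ y := fun y hy hyN =>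
        truncL_eq d _ ((hiff y hy).1 hyN)
      have hxU₀ : x ∈ U₀ := ⟨hxU, by
        simp only [mem_preimage]; rw [hfix x hxU hx]; exact hmφ hxU⟩
      obtain ⟨r, hr, hrU⟩ := Metric.nhds_basis_closedBall.mem_iff.1 (hU₀o.mem_nhds hxU₀)
      refine ⟨closedBall x r, mem_nhdsWithin_of_mem_nhds (closedBall_mem_nhds x hr),
        U₀, fun y => ψ (truncL d (φ y)), hU₀o, ?_, ?_, ?_, ?_⟩
      · exact (closure_minimal inter_subset_left isClosed_closedBall).trans hrU
      · exact hψ.comp (hcont.mono inter_subset_left) (fun y hy => hy.2)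
      · intro y hy
        refine (hiff _ (hmψ hy.2)).2 ?_
        intro i hi
        rw [hφψ _ hy.2, truncL_apply, if_pos hi]
      · intro y hy hyN
        simp only
        rw [hfix y hy.1 hyN, hψφ y hy.1]
  rw [inter_self] at main
  obtain ⟨W, ρ, h1, h2, h3, h4, h5⟩ := main
  have hNW : N ⊆ W := subset_closure.trans h2
  exact ⟨W, ρ, h1, hNW, h3, h4, fun y hy => h5 y (hNW hy) hy⟩
/-- `f : ℝ^l → N`, equal to `b` far away, is homotopic to the constant `b` within maps equal to `b`
outside a fixed ball. -/
def NullHtpy {l ν : ℕ} (N : Set (EuclideanSpace ℝ (Fin ν))) (b : EuclideanSpace ℝ (Fin ν))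
    (f : EuclideanSpace ℝ (Fin l) → EuclideanSpace ℝ (Fin ν)) : Prop :=
  ∃ (T : ℝ) (K : EuclideanSpace ℝ (Fin l) × ℝ → EuclideanSpace ℝ (Fin ν)),
    ContinuousOn K (univ ×ˢ Icc (0 : ℝ) 1) ∧
    (∀ x, ∀ s ∈ Icc (0 : ℝ) 1, K (x, s) ∈ N) ∧
    (∀ x, K (x, 0) = f x) ∧ (∀ x, K (x, 1) = b) ∧
    (∀ x, ∀ s ∈ Icc (0 : ℝ) 1, T ≤ ‖x‖ → K (x, s) = b)

/-- The affine map from the unit cube to the centered cube of side `Λ`. -/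
def cubeMap {l : ℕ} (Λ : ℝ) (y : Fin l → unitInterval) : EuclideanSpace ℝ (Fin l) :=
  WithLp.toLp 2 (fun i => Λ * ((y i : ℝ) - 1 / 2))

lemma continuous_cubeMap {l : ℕ} (Λ : ℝ) : Continuous (cubeMap (l := l) Λ) := by
  unfold cubeMap
  refine (PiLp.continuous_toLp 2 _).comp ?_
  fun_prop

lemma norm_cubeMap_boundary {l : ℕ} {Λ : ℝ} (hΛ : 0 ≤ Λ) (y : Fin l → unitInterval)
    (hy : y ∈ Cube.boundary (Fin l)) : Λ / 2 ≤ ‖cubeMap Λ y‖ := by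
  obtain ⟨i, hi⟩ := hy
  have h := PiLp.norm_apply_le (cubeMap Λ y) i
  refine le_trans ?_ h
  have : (cubeMap Λ y) i = Λ * ((y i : ℝ) - 1 / 2) := rfl
  rw [this, Real.norm_eq_abs, abs_mul, abs_of_nonneg hΛ]
  rcases hi with hi | hi <;> rw [hi] <;> norm_num <;> linarith

lemma homotopic_of {l ν : ℕ} {N : Set (EuclideanSpace ℝ (Fin ν))}
    {b : EuclideanSpace ℝ (Fin ν)} {hb : b ∈ N}
    (K : EuclideanSpace ℝ (Fin l) × ℝ → EuclideanSpace ℝ (Fin ν)) {T Λ : ℝ}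
    (hK : ContinuousOn K (univ ×ˢ Icc (0 : ℝ) 1))
    (hKN : ∀ x, ∀ s ∈ Icc (0 : ℝ) 1, K (x, s) ∈ N)
    (hKb : ∀ x, ∀ s ∈ Icc (0 : ℝ) 1, T ≤ ‖x‖ → K (x, s) = b) (hΛ : 0 ≤ Λ) (hT : 2 * T ≤ Λ)
    (γ₀ γ₁ : GenLoop (Fin l) ↥N ⟨b, hb⟩)
    (h0 : ∀ y, (γ₀ y : EuclideanSpace ℝ (Fin ν)) = K (cubeMap Λ y, 0))
    (h1 : ∀ y, (γ₁ y : EuclideanSpace ℝ (Fin ν)) = K (cubeMap Λ y, 1)) :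
    GenLoop.Homotopic γ₀ γ₁ := by
  refine ⟨⟨⟨⟨fun z => ⟨K (cubeMap Λ z.2, (z.1 : ℝ)), hKN _ _ z.1.2⟩, ?_⟩, ?_, ?_⟩, ?_⟩⟩
  · refine Continuous.subtype_mk ?_ _
    refine hK.comp_continuous ?_ (fun z => ⟨mem_univ _, z.1.2⟩)
    exact ((continuous_cubeMap Λ).comp continuous_snd).prodMk
      (continuous_subtype_val.comp continuous_fst)
  · intro y; exact Subtype.ext (h0 y).symm
  · intro y; exact Subtype.ext (h1 y).symm
  · intro t y hy
    have e : γ₀ y = ⟨b, hb⟩ := γ₀.2 y hy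
    refine Subtype.ext ?_
    have e2 : (γ₀.1 y) = ⟨b, hb⟩ := e
    simp only [ContinuousMap.coe_mk, e2]
    have := norm_cubeMap_boundary hΛ y hy
    exact hKb _ _ t.2 (by linarith)

/-- clamp -/
def clampMap {l : ℕ} (x : Fin l → ℝ) : Fin l → unitInterval :=
  fun i => projIcc 0 1 zero_le_one (1 / 2 + x i)

lemma continuous_clampMap {l : ℕ} : Continuous (clampMap (l := l)) := by
  unfold clampMap
  refine continuous_pi fun i => continuous_projIcc.comp ?_
  fun_prop

lemma clampMap_boundary {l : ℕ} (x : Fin l → ℝ) (i : Fin l) (h : 1 / 2 ≤ |x i|) :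
    clampMap x ∈ Cube.boundary (Fin l) := by
  refine ⟨i, ?_⟩
  unfold clampMap
  rcases le_abs'.1 h with h | h
  · left; exact projIcc_of_le_left _ (by linarith)
  · right; exact projIcc_of_right_le _ (by linarith)

lemma exists_large_coord {l : ℕ} (hl : 1 ≤ l) (x : EuclideanSpace ℝ (Fin l)) (h : (l : ℝ) ≤ ‖x‖) :
    ∃ i, 1 / 2 ≤ |x i| := by
  by_contra! hc
  have h1 : ‖x‖ ^ 2 = ∑ i, ‖x i‖ ^ 2 := EuclideanSpace.norm_sq_eq x
  have h2 : ∑ i, ‖x i‖ ^ 2 ≤ ∑ i : Fin l, (1 : ℝ) / 4 := by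
    refine Finset.sum_le_sum fun i _ => ?_
    rw [Real.norm_eq_abs]
    nlinarith [hc i, abs_nonneg (x i)]
  rw [← h1] at h2
  simp only [Finset.sum_const, Finset.card_univ, Fintype.card_fin, nsmul_eq_mul] at h2
  have hl' : (1 : ℝ) ≤ l := by exact_mod_cast hl
  nlinarith

lemma nullHtpy_scale {l ν : ℕ} {N : Set (EuclideanSpace ℝ (Fin ν))}
    {b : EuclideanSpace ℝ (Fin ν)} {f : EuclideanSpace ℝ (Fin l) → EuclideanSpace ℝ (Fin ν)}
    {a : ℝ} (ha : 0 < a) (h : NullHtpy N b (fun x => f (a • x))) : NullHtpy N b f := by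
  obtain ⟨T, K, h1, h2, h3, h4, h5⟩ := h
  refine ⟨a * T, fun z => K (a⁻¹ • z.1, z.2), ?_, ?_, ?_, ?_, ?_⟩
  · refine h1.comp (Continuous.continuousOn (by fun_prop)) ?_
    intro z hz; exact ⟨mem_univ _, hz.2⟩
  · intro x s hs; exact h2 _ _ hs
  · intro x; simp only [h3]; rw [smul_inv_smul₀ ha.ne']
  · intro x; exact h4 _
  · intro x s hs hT
    refine h5 _ _ hs ?_
    rw [norm_smul, norm_inv, Real.norm_eq_abs, abs_of_pos ha]
    rw [inv_mul_eq_div, le_div_iff₀ ha]; linarith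

lemma exists_smooth_nontrivial {l ν : ℕ} (hl : 1 ≤ l) {N : Set (EuclideanSpace ℝ (Fin ν))}
    (hN : IsCompact N) {b : EuclideanSpace ℝ (Fin ν)} (hb : b ∈ N)
    {W : Set (EuclideanSpace ℝ (Fin ν))}
    {ρ : EuclideanSpace ℝ (Fin ν) → EuclideanSpace ℝ (Fin ν)}
    (hW : IsOpen W) (hNW : N ⊆ W) (hρ : ContDiffOn ℝ (⊤ : ℕ∞) ρ W) (hρN : MapsTo ρ W N)
    (hρid : ∀ y ∈ N, ρ y = y)
    (hπ : Nontrivial (HomotopyGroup (Fin l) ↥N ⟨b, hb⟩)) :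
    ∃ f : EuclideanSpace ℝ (Fin l) → EuclideanSpace ℝ (Fin ν),
      ContDiff ℝ (⊤ : ℕ∞) f ∧ (∀ x, f x ∈ N) ∧ (∀ x, 1 ≤ ‖x‖ → f x = b) ∧ ¬ NullHtpy N b f := by
  -- a nontrivial loop
  have hγ : ∃ γ : GenLoop (Fin l) ↥N ⟨b, hb⟩, ¬ GenLoop.Homotopic γ GenLoop.const := by
    by_contra! hc
    obtain ⟨α, β, hαβ⟩ := hπ
    refine hαβ ?_
    induction α using Quotient.inductionOn with | _ α => ?_
    induction β using Quotient.inductionOn with | _ β => ?_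
    exact Quotient.sound ((hc α).trans (hc β).symm)
  obtain ⟨γ, hγ⟩ := hγ
  set g : EuclideanSpace ℝ (Fin l) → EuclideanSpace ℝ (Fin ν) :=
    fun x => (γ (clampMap x.ofLp) : EuclideanSpace ℝ (Fin ν)) with hg
  have hgc : Continuous g :=
    continuous_subtype_val.comp (γ.1.continuous.comp
      (continuous_clampMap.comp (PiLp.continuous_ofLp 2 _)))
  have hgN : ∀ x, g x ∈ N := fun x => (γ (clampMap x.ofLp)).2
  have hgb : ∀ x : EuclideanSpace ℝ (Fin l), (l : ℝ) ≤ ‖x‖ → g x = b := by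
    intro x hx
    obtain ⟨i, hi⟩ := exists_large_coord hl x hx
    have : γ (clampMap x.ofLp) = ⟨b, hb⟩ := γ.2 _ (clampMap_boundary x.ofLp i hi)
    simp [hg, this]
  obtain ⟨δ, hδ, hδW⟩ := hN.exists_thickening_subset_open hW hNW
  have hl0 : (0 : ℝ) < l := by exact_mod_cast hl
  -- smooth approximation
  obtain ⟨h, hh⟩ := exists_contMDiffMap_forall_mem_convex_of_local_const (n := (⊤ : ℕ∞))
    (modelWithCornersSelf ℝ (EuclideanSpace ℝ (Fin l)))
    (F := EuclideanSpace ℝ (Fin ν))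
    (t := fun x => {y | dist y (g x) < δ ∧ ((l : ℝ) + 1 ≤ ‖x‖ → y = b)}) (by
      intro x
      have : {y | dist y (g x) < δ ∧ ((l : ℝ) + 1 ≤ ‖x‖ → y = b)} =
        ball (g x) δ ∩ {y | (l : ℝ) + 1 ≤ ‖x‖ → y = b} := rfl
      rw [this]
      refine (convex_ball _ _).inter ?_
      by_cases hx : (l : ℝ) + 1 ≤ ‖x‖
      · simpa [hx] using convex_singleton b
      · simp [hx, convex_univ]) (by
      intro x
      by_cases hx : (l : ℝ) < ‖x‖
      · refine ⟨b, ?_⟩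
        have : {y : EuclideanSpace ℝ (Fin l) | (l : ℝ) < ‖y‖} ∈ 𝓝 x :=
          (isOpen_lt continuous_const continuous_norm).mem_nhds hx
        filter_upwards [this] with y hy
        refine ⟨?_, fun _ => rfl⟩
        rw [hgb y (le_of_lt hy), dist_self]; exact hδ
      · refine ⟨g x, ?_⟩
        have h1 : {y : EuclideanSpace ℝ (Fin l) | ‖y‖ < (l : ℝ) + 1} ∈ 𝓝 x :=
          (isOpen_lt continuous_norm continuous_const).mem_nhds
            (show ‖x‖ < (l : ℝ) + 1 by linarith)
        have h2 := hgc.continuousAt.preimage_mem_nhds (x := x) (ball_mem_nhds (g x) hδ)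
        filter_upwards [h1, h2] with y hy1 hy2
        refine ⟨by rw [dist_comm]; exact hy2, fun h => ?_⟩
        exact absurd h (not_le.2 hy1))
  have hhs : ContDiff ℝ (⊤ : ℕ∞) h := contMDiff_iff_contDiff.1 h.contMDiff
  have hseg : ∀ x, ∀ s ∈ Icc (0 : ℝ) 1, (1 - s) • g x + s • h x ∈ W := by
    intro x s hs
    refine hδW ?_
    rw [mem_thickening_iff]
    refine ⟨g x, hgN x, ?_⟩
    have e : (1 - s) • g x + s • h x - g x = s • (h x - g x) := by module
    rw [dist_eq_norm, e, norm_smul, Real.norm_eq_abs, abs_of_nonneg hs.1]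
    have := (hh x).1
    rw [dist_eq_norm] at this
    nlinarith [hs.2, norm_nonneg (h x - g x)]
  have hhW : ∀ x, h x ∈ W := fun x => by simpa using hseg x 1 (by simp)
  set f : EuclideanSpace ℝ (Fin l) → EuclideanSpace ℝ (Fin ν) := fun x => ρ (h x) with hf
  have hfs : ContDiff ℝ (⊤ : ℕ∞) f := hρ.comp_contDiff hhs hhW
  have hfb : ∀ x, (l : ℝ) + 1 ≤ ‖x‖ → f x = b := fun x hx => by
    simp only [hf, (hh x).2 hx, hρid b hb]
  refine ⟨fun x => f (((l : ℝ) + 1) • x), hfs.comp (contDiff_const_smul _),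
    fun x => hρN (hhW _), ?_, fun hnull => hγ ?_⟩
  · intro x hx
    refine hfb _ ?_
    rw [norm_smul, Real.norm_eq_abs, abs_of_pos (by positivity)]
    nlinarith
  obtain ⟨T, K, hK1, hK2, hK3, hK4, hK5⟩ := nullHtpy_scale (by positivity) hnull
  set Λ : ℝ := max (2 * T) (2 * (l + 1)) with hΛdef
  have hΛ1 : 2 * T ≤ Λ := le_max_left _ _
  have hΛ2 : 2 * ((l : ℝ) + 1) ≤ Λ := le_max_right _ _
  have hΛ0 : 0 ≤ Λ := by linarith
  let γ₁ : GenLoop (Fin l) ↥N ⟨b, hb⟩ := ⟨⟨fun y => ⟨g (cubeMap Λ y), hgN _⟩,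
    Continuous.subtype_mk (hgc.comp (continuous_cubeMap Λ)) _⟩, fun y hy => Subtype.ext (by
      have := norm_cubeMap_boundary hΛ0 y hy
      exact hgb _ (by linarith))⟩
  let γ₂ : GenLoop (Fin l) ↥N ⟨b, hb⟩ := ⟨⟨fun y => ⟨f (cubeMap Λ y), hρN (hhW _)⟩,
    Continuous.subtype_mk (hfs.continuous.comp (continuous_cubeMap Λ)) _⟩,
    fun y hy => Subtype.ext (by
      have := norm_cubeMap_boundary hΛ0 y hy
      exact hfb _ (by linarith))⟩
  have H23 : GenLoop.Homotopic γ₂ GenLoop.const :=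
    homotopic_of K hK1 hK2 hK5 hΛ0 hΛ1 γ₂ _ (fun y => (hK3 _).symm) (fun y => (hK4 _).symm)
  have H12 : GenLoop.Homotopic γ₁ γ₂ := by
    refine homotopic_of (T := l + 1) (fun z => ρ ((1 - z.2) • g z.1 + z.2 • h z.1))
      ?_ ?_ ?_ hΛ0 hΛ2 γ₁ γ₂ ?_ ?_
    · refine hρ.continuousOn.comp (Continuous.continuousOn ?_) (fun z hz => hseg z.1 z.2 hz.2)
      have := hhs.continuous
      fun_prop
    · intro x s hs; exact hρN (hseg x s hs)
    · intro x s hs hx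
      simp only [(hh x).2 hx, hgb x (by linarith)]
      rw [← add_smul]; simp [hρid b hb]
    · intro y; simp only [sub_zero, one_smul, zero_smul, add_zero]
      exact (hρid _ (hgN _)).symm
    · intro y; simp only [sub_self, one_smul, zero_smul, zero_add]; rfl
  have H01 : GenLoop.Homotopic γ γ₁ := by
    have hc : ∀ (μ : ℝ) (hμ : 1 ≤ μ) (y : Fin l → unitInterval) (_ : y ∈ Cube.boundary (Fin l)),
        γ (clampMap (cubeMap μ y).ofLp) = ⟨b, hb⟩ := by
      intro μ hμ y hy
      obtain ⟨i, hi⟩ := hy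
      refine γ.2 _ (clampMap_boundary _ i ?_)
      have e : (cubeMap μ y).ofLp i = μ * ((y i : ℝ) - 1 / 2) := rfl
      rw [e, abs_mul, abs_of_nonneg (by linarith)]
      rcases hi with hi | hi <;> rw [hi] <;> norm_num <;> linarith
    refine ⟨⟨⟨⟨fun z => γ (clampMap (cubeMap (1 + (z.1 : ℝ) * (Λ - 1)) z.2).ofLp), ?_⟩, ?_, ?_⟩, ?_⟩⟩
    · refine γ.1.continuous.comp (continuous_clampMap.comp ?_)
      unfold cubeMap
      fun_prop
    · intro y
      have : clampMap (cubeMap 1 y).ofLp = y := by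
        ext i
        simp [clampMap, cubeMap, projIcc_val]
      simp [this]
    · intro y
      have e' : 1 + ((1 : unitInterval) : ℝ) * (Λ - 1) = Λ := by simp
      simp only [e']
      rfl
    · intro t y hy
      have e : γ.1 y = ⟨b, hb⟩ := γ.2 y hy
      simp only [ContinuousMap.coe_mk, e]
      refine hc _ ?_ y hy
      have := t.2.1
      nlinarith
  exact (H01.trans H12).trans H23
/-- Ray estimate. -/
lemma ray_estimate {l ν : ℕ} {R : ℝ} {w : EuclideanSpace ℝ (Fin l) → EuclideanSpace ℝ (Fin ν)}
    {b : EuclideanSpace ℝ (Fin ν)} {O : Set (EuclideanSpace ℝ (Fin l))} (hO : IsOpen O)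
    (hRO : closedBall 0 R ⊆ O) (hw : ContDiffOn ℝ 1 w O) (hwb : ∀ x, ‖x‖ = R → w x = b)
    {F : EuclideanSpace ℝ (Fin l) → ℝ≥0∞}
    (hF : ∀ x ∈ ball (0 : EuclideanSpace ℝ (Fin l)) R, ‖fderiv ℝ w x‖ₑ ≤ F x)
    {x₀ v : EuclideanSpace ℝ (Fin l)} (hx₀ : ‖x₀‖ < R) (hv : R ≤ ‖x₀ + v‖) :
    ‖w x₀ - b‖ₑ ≤ ∫⁻ s in Ioo (0 : ℝ) 1, (ball 0 R).indicator F (x₀ + s • v) * ‖v‖ₑ := by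
  have hc : ContinuousOn (fun s : ℝ => ‖x₀ + s • v‖) (Icc 0 1) :=
    Continuous.continuousOn (by fun_prop)
  obtain ⟨τ, hτ, hτR⟩ := intermediate_value_Icc zero_le_one hc
    (show R ∈ Icc _ _ by simp [hx₀.le, hv])
  simp only at hτR
  have hball : ∀ s ∈ Ico (0 : ℝ) τ, x₀ + s • v ∈ ball (0 : EuclideanSpace ℝ (Fin l)) R := by
    intro s hs
    rw [mem_ball_zero_iff]
    have hτ0 : 0 < τ := lt_of_le_of_lt hs.1 hs.2
    have e : x₀ + s • v = (1 - s / τ) • x₀ + (s / τ) • (x₀ + τ • v) := by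
      rw [smul_add, smul_smul, div_mul_cancel₀ _ hτ0.ne']; module
    have h1 : s / τ < 1 := by rw [div_lt_one hτ0]; exact hs.2
    have h0 : 0 ≤ s / τ := div_nonneg hs.1 hτ0.le
    calc ‖x₀ + s • v‖ ≤ (1 - s / τ) * ‖x₀‖ + (s / τ) * ‖x₀ + τ • v‖ := by
          rw [e]; refine (norm_add_le _ _).trans ?_
          rw [norm_smul, norm_smul, Real.norm_eq_abs, Real.norm_eq_abs, abs_of_nonneg h0,
            abs_of_nonneg (by linarith)]
      _ < R := by rw [hτR]; nlinarith
  have hmem : ∀ s ∈ Icc (0 : ℝ) τ, x₀ + s • v ∈ closedBall (0 : EuclideanSpace ℝ (Fin l)) R := by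
    intro s hs
    rcases eq_or_lt_of_le hs.2 with h | h
    · rw [h, mem_closedBall_zero_iff, hτR]
    · exact ball_subset_closedBall (hball s ⟨hs.1, h⟩)
  set φ : ℝ → EuclideanSpace ℝ (Fin ν) := fun s => w (x₀ + s • v) with hφ
  have hφc : ContDiffOn ℝ 1 φ (Icc 0 τ) := by
    refine hw.comp (ContDiff.contDiffOn (by fun_prop)) (fun s hs => hRO (hmem s hs))
  have h1 := enorm_sub_le_lintegral_deriv_of_contDiffOn_Icc hφc hτ.1
  have h2 : ‖φ τ - φ 0‖ₑ = ‖w x₀ - b‖ₑ := by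
    simp only [hφ, hwb _ hτR, zero_smul, add_zero]
    rw [← enorm_neg, neg_sub]
  rw [← h2]
  refine h1.trans ?_
  rw [setLIntegral_congr (Ioo_ae_eq_Icc (a := (0 : ℝ)) (b := τ)).symm]
  refine (setLIntegral_mono' measurableSet_Ioo ?_).trans
    (lintegral_mono_set (Ioo_subset_Ioo_right hτ.2))
  intro s hs
  have hb := hball s ⟨hs.1.le, hs.2⟩
  have hd : HasFDerivAt w (fderiv ℝ w (x₀ + s • v)) (x₀ + s • v) :=
    ((hw.contDiffAt (hO.mem_nhds (hRO (ball_subset_closedBall hb)))).differentiableAt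
      (by norm_num)).hasFDerivAt
  have hl : HasDerivAt (fun s : ℝ => x₀ + s • v) v s := by
    simpa using ((hasDerivAt_id s).smul_const v).const_add x₀
  have hder : deriv φ s = fderiv ℝ w (x₀ + s • v) v := (hd.comp_hasDerivAt s hl).deriv
  rw [hder, indicator_of_mem hb]
  refine (ContinuousLinearMap.le_opENorm _ _).trans ?_
  gcongr
  exact hF _ hb

lemma lintegral_translate_scale {l : ℕ} (G : EuclideanSpace ℝ (Fin l) → ℝ≥0∞) (hG : Measurable G)
    (x₀ : EuclideanSpace ℝ (Fin l)) {s : ℝ} (hs : 0 < s) :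
    ∫⁻ v, G (x₀ + s • v) = ENNReal.ofReal ((s ^ l)⁻¹) * ∫⁻ v, G v := by
  have h1 : ∫⁻ v, G (x₀ + s • v) = ∫⁻ z, G (x₀ + z) ∂(Measure.map (fun v => s • v) volume) := by
    rw [lintegral_map (by fun_prop) (by fun_prop)]
  rw [h1, Measure.map_addHaar_smul _ hs.ne', lintegral_smul_measure, finrank_euclideanSpace_fin,
    abs_of_pos (by positivity), lintegral_add_left_eq_self (μ := volume) G x₀, smul_eq_mul]

lemma lintegral_rpow_Ioo_ne_top {a : ℝ} (ha : -1 < a) :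
    ∫⁻ s in Ioo (0 : ℝ) 1, ENNReal.ofReal (s ^ a) ≠ ⊤ := by
  have h : IntegrableOn (fun s : ℝ => s ^ a) (Ioo 0 1) :=
    (intervalIntegral.integrableOn_Ioo_rpow_iff one_pos).2 ha
  exact (Integrable.lintegral_lt_top h).ne

lemma morrey {l ν : ℕ} (hl : 1 ≤ l) (p : ℝ) (hp : p = (l : ℝ) + 1) :
    ∃ C : ℝ≥0∞, C ≠ ⊤ ∧ ∀ (R : ℝ) (_ : 0 < R)
      (w : EuclideanSpace ℝ (Fin l) → EuclideanSpace ℝ (Fin ν))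
      (b : EuclideanSpace ℝ (Fin ν)) (O : Set (EuclideanSpace ℝ (Fin l))) (_ : IsOpen O)
      (_ : closedBall 0 R ⊆ O) (_ : ContDiffOn ℝ 1 w O) (_ : ∀ x, ‖x‖ = R → w x = b)
      (F : EuclideanSpace ℝ (Fin l) → ℝ≥0∞) (_ : Measurable F)
      (_ : ∀ x ∈ ball (0 : EuclideanSpace ℝ (Fin l)) R, ‖fderiv ℝ w x‖ₑ ≤ F x)
      (x₀ : EuclideanSpace ℝ (Fin l)) (_ : ‖x₀‖ < R),
      ‖w x₀ - b‖ₑ ^ p ≤ C * ENNReal.ofReal R * ∫⁻ x in ball 0 R, F x ^ p := by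
  have hl1 : (1 : ℝ) ≤ l := by exact_mod_cast hl
  have hp0 : 0 < p := by linarith
  set α : ℝ := ((l : ℝ) - 1 / 2) / p with hα
  set q : ℝ := p / l with hq
  have hpq : p.HolderConjugate q := by
    rw [Real.holderConjugate_iff]
    refine ⟨by linarith, ?_⟩
    rw [hq, hp]; field_simp; ring
  have hα0 : 0 < α := by rw [hα]; apply div_pos <;> linarith
  have hαp : α * p = l - 1 / 2 := by rw [hα]; field_simp
  have hq0 : 0 < q := hpq.symm.pos
  have hαq : -1 < -α * q := by
    rw [hα, hq]
    have : -(((l : ℝ) - 1 / 2) / p) * (p / l) = -1 + 1 / (2 * l) := by field_simp; ring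
    rw [this]
    have : 0 < 1 / (2 * (l : ℝ)) := by positivity
    linarith
  set c₁ : ℝ≥0∞ := (∫⁻ s in Ioo (0 : ℝ) 1, ENNReal.ofReal (s ^ (-α * q))) ^ (p / q) with hc₁
  set c₂ : ℝ≥0∞ := ∫⁻ s in Ioo (0 : ℝ) 1, ENNReal.ofReal (s ^ (-1 / 2 : ℝ)) with hc₂
  have hc₁t : c₁ ≠ ⊤ :=
    ENNReal.rpow_ne_top_of_nonneg (by positivity) (lintegral_rpow_Ioo_ne_top hαq)
  have hc₂t : c₂ ≠ ⊤ := lintegral_rpow_Ioo_ne_top (by norm_num)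
  set ω : ℝ≥0∞ := volume (ball (0 : EuclideanSpace ℝ (Fin l)) 1) with hω
  have hω0 : ω ≠ 0 := (measure_ball_pos _ _ one_pos).ne'
  have hωt : ω ≠ ⊤ := measure_ball_lt_top.ne
  refine ⟨ENNReal.ofReal (4 ^ p) * c₁ * c₂ / ω,
    ENNReal.div_ne_top (by finiteness) hω0, ?_⟩
  intro R hR w b O hO hRO hw hwb F hFm hF x₀ hx₀
  set G := (ball (0 : EuclideanSpace ℝ (Fin l)) R).indicator F with hG
  have hGm : Measurable G := hFm.indicator measurableSet_ball
  set I := ∫⁻ x in ball 0 R, F x ^ p with hI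
  have hGI : ∫⁻ x, G x ^ p = I := by
    rw [hI, ← lintegral_indicator measurableSet_ball]
    congr 1; ext x
    by_cases hx : x ∈ ball (0 : EuclideanSpace ℝ (Fin l)) R
    · simp [hG, hx]
    · simp [hG, hx, hp0]
  let i₀ : Fin l := ⟨0, hl⟩
  set e : EuclideanSpace ℝ (Fin l) := EuclideanSpace.single i₀ 1 with he
  have hen : ‖e‖ = 1 := by simp [he]
  set A := ball ((3 * R) • e) R with hA
  have hAv : ∀ v ∈ A, R ≤ ‖x₀ + v‖ ∧ ‖v‖ ≤ 4 * R := by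
    intro v hv
    rw [hA, mem_ball, dist_eq_norm] at hv
    have h3 : ‖(3 * R) • e‖ = 3 * R := by
      rw [norm_smul, hen, Real.norm_eq_abs, abs_of_pos (by linarith), mul_one]
    constructor
    · have : ‖(3 * R) • e‖ ≤ ‖x₀ + v‖ + ‖v - (3 * R) • e‖ + ‖x₀‖ := by
        have e1 : (3 * R) • e = (x₀ + v) - (v - (3 * R) • e) - x₀ := by abel
        calc ‖(3 * R) • e‖ = ‖(x₀ + v) - (v - (3 * R) • e) - x₀‖ := by rw [← e1]
          _ ≤ _ := (norm_sub_le _ _).trans (by gcongr; exact norm_sub_le _ _)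
      linarith
    · have : ‖v‖ ≤ ‖v - (3 * R) • e‖ + ‖(3 * R) • e‖ := by
        simpa using norm_add_le (v - (3 * R) • e) ((3 * R) • e)
      linarith
  have hpt : ∀ v ∈ A, ‖w x₀ - b‖ₑ ^ p ≤ ENNReal.ofReal ((4 * R) ^ p) * c₁ *
      ∫⁻ s in Ioo (0 : ℝ) 1, ENNReal.ofReal (s ^ (α * p)) * G (x₀ + s • v) ^ p := by
    intro v hv
    have h1 := ray_estimate hO hRO hw hwb hF hx₀ (hAv v hv).1
    have hv4 : ‖v‖ₑ ≤ ENNReal.ofReal (4 * R) := by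
      rw [← ofReal_norm]; exact ENNReal.ofReal_le_ofReal (hAv v hv).2
    have hGm' : Measurable fun s : ℝ => G (x₀ + s • v) := hGm.comp (by fun_prop)
    have h2 : ∫⁻ s in Ioo (0 : ℝ) 1, G (x₀ + s • v) * ‖v‖ₑ ≤
        ENNReal.ofReal (4 * R) * ∫⁻ s in Ioo (0 : ℝ) 1, G (x₀ + s • v) := by
      rw [lintegral_mul_const _ hGm', mul_comm]
      gcongr
    have h3 : ∫⁻ s in Ioo (0 : ℝ) 1, G (x₀ + s • v) ≤
        (∫⁻ s in Ioo (0 : ℝ) 1, ENNReal.ofReal (s ^ (α * p)) * G (x₀ + s • v) ^ p) ^ (1 / p) *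
        (∫⁻ s in Ioo (0 : ℝ) 1, ENNReal.ofReal (s ^ (-α * q))) ^ (1 / q) := by
      have hh := ENNReal.lintegral_mul_le_Lp_mul_Lq (volume.restrict (Ioo (0 : ℝ) 1)) hpq
        (f := fun s => ENNReal.ofReal (s ^ α) * G (x₀ + s • v))
        (g := fun s => ENNReal.ofReal (s ^ (-α)))
        (by fun_prop) (by fun_prop)
      have ea : ∫⁻ s in Ioo (0 : ℝ) 1, G (x₀ + s • v) =
          ∫⁻ s in Ioo (0 : ℝ) 1, ((fun s => ENNReal.ofReal (s ^ α) * G (x₀ + s • v)) *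
            fun s => ENNReal.ofReal (s ^ (-α))) s := by
        refine setLIntegral_congr_fun measurableSet_Ioo fun s hs => ?_
        simp only [Pi.mul_apply]
        rw [mul_right_comm, ← ENNReal.ofReal_mul (Real.rpow_nonneg hs.1.le _),
          ← Real.rpow_add hs.1]
        simp
      have eb : ∫⁻ s in Ioo (0 : ℝ) 1, (ENNReal.ofReal (s ^ α) * G (x₀ + s • v)) ^ p =
          ∫⁻ s in Ioo (0 : ℝ) 1, ENNReal.ofReal (s ^ (α * p)) * G (x₀ + s • v) ^ p := by
        refine setLIntegral_congr_fun measurableSet_Ioo fun s hs => ?_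
        rw [ENNReal.mul_rpow_of_nonneg _ _ hp0.le,
          ENNReal.ofReal_rpow_of_nonneg (Real.rpow_nonneg hs.1.le _) hp0.le,
          ← Real.rpow_mul hs.1.le]
      have ec : ∫⁻ s in Ioo (0 : ℝ) 1, (ENNReal.ofReal (s ^ (-α))) ^ q =
          ∫⁻ s in Ioo (0 : ℝ) 1, ENNReal.ofReal (s ^ (-α * q)) := by
        refine setLIntegral_congr_fun measurableSet_Ioo fun s hs => ?_
        rw [ENNReal.ofReal_rpow_of_nonneg (Real.rpow_nonneg hs.1.le _) hq0.le,
          ← Real.rpow_mul hs.1.le]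
      rw [ea, ← eb, ← ec]
      exact hh
    calc ‖w x₀ - b‖ₑ ^ p ≤ (ENNReal.ofReal (4 * R) *
        ((∫⁻ s in Ioo (0 : ℝ) 1, ENNReal.ofReal (s ^ (α * p)) * G (x₀ + s • v) ^ p) ^ (1 / p) *
        (∫⁻ s in Ioo (0 : ℝ) 1, ENNReal.ofReal (s ^ (-α * q))) ^ (1 / q))) ^ p := by
          gcongr
          exact h1.trans (h2.trans (by gcongr))
      _ = _ := by
          rw [ENNReal.mul_rpow_of_nonneg _ _ hp0.le, ENNReal.mul_rpow_of_nonneg _ _ hp0.le,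
            ← ENNReal.rpow_mul, ← ENNReal.rpow_mul, one_div_mul_cancel hp0.ne', ENNReal.rpow_one,
            ENNReal.ofReal_rpow_of_pos (by linarith), hc₁,
            show 1 / q * p = p / q by ring]
          ring
  have hIntg : ‖w x₀ - b‖ₑ ^ p * volume A ≤ ENNReal.ofReal ((4 * R) ^ p) * c₁ * (c₂ * I) := by
    have hGm2 : Measurable (fun z : EuclideanSpace ℝ (Fin l) × ℝ =>
        ENNReal.ofReal (z.2 ^ (α * p)) * G (x₀ + z.2 • z.1) ^ p) := by
      refine Measurable.mul (by fun_prop) ((hGm.comp (by fun_prop)).pow_const p)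
    calc ‖w x₀ - b‖ₑ ^ p * volume A = ∫⁻ v in A, ‖w x₀ - b‖ₑ ^ p := by
          rw [setLIntegral_const]
      _ ≤ ∫⁻ v in A, ENNReal.ofReal ((4 * R) ^ p) * c₁ *
            ∫⁻ s in Ioo (0 : ℝ) 1, ENNReal.ofReal (s ^ (α * p)) * G (x₀ + s • v) ^ p :=
          setLIntegral_mono' measurableSet_ball hpt
      _ ≤ ∫⁻ v, ENNReal.ofReal ((4 * R) ^ p) * c₁ *
            ∫⁻ s in Ioo (0 : ℝ) 1, ENNReal.ofReal (s ^ (α * p)) * G (x₀ + s • v) ^ p :=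
          setLIntegral_le_lintegral _ _
      _ = ENNReal.ofReal ((4 * R) ^ p) * c₁ *
            ∫⁻ v, ∫⁻ s in Ioo (0 : ℝ) 1, ENNReal.ofReal (s ^ (α * p)) * G (x₀ + s • v) ^ p := by
          rw [lintegral_const_mul]
          exact hGm2.lintegral_prod_right'
      _ = ENNReal.ofReal ((4 * R) ^ p) * c₁ *
            ∫⁻ s in Ioo (0 : ℝ) 1, ∫⁻ v, ENNReal.ofReal (s ^ (α * p)) * G (x₀ + s • v) ^ p := by
          rw [lintegral_lintegral_swap]
          exact hGm2.aemeasurable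
      _ = ENNReal.ofReal ((4 * R) ^ p) * c₁ *
            ∫⁻ s in Ioo (0 : ℝ) 1, ENNReal.ofReal (s ^ (-1 / 2 : ℝ)) * I := by
          congr 1
          refine setLIntegral_congr_fun measurableSet_Ioo fun s hs => ?_
          have hms : Measurable fun v : EuclideanSpace ℝ (Fin l) => G (x₀ + s • v) ^ p :=
            (hGm.comp (by fun_prop)).pow_const p
          rw [lintegral_const_mul _ hms,
            lintegral_translate_scale (fun v => G v ^ p) (hGm.pow_const p) x₀ hs.1, hGI,
            ← mul_assoc, ← ENNReal.ofReal_mul (Real.rpow_nonneg hs.1.le _)]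
          congr 2
          rw [hαp, ← Real.rpow_natCast, ← Real.rpow_neg hs.1.le, ← Real.rpow_add hs.1]
          congr 1; ring
      _ = _ := by
          rw [lintegral_mul_const _ (by fun_prop)]
  have hvA : volume A = ENNReal.ofReal (R ^ l) * ω := by
    rw [hA, Measure.addHaar_ball_of_pos _ _ hR, finrank_euclideanSpace_fin]
  have h4R : ENNReal.ofReal ((4 * R) ^ p) =
      ENNReal.ofReal (4 ^ p) * ENNReal.ofReal R * ENNReal.ofReal (R ^ l) := by
    rw [← ENNReal.ofReal_mul (by positivity), ← ENNReal.ofReal_mul (by positivity)]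
    congr 1
    rw [Real.mul_rpow (by norm_num) hR.le, hp, Real.rpow_add hR, Real.rpow_one, Real.rpow_natCast]
    ring
  have hRl0 : ENNReal.ofReal (R ^ l) ≠ 0 := by
    rw [Ne, ENNReal.ofReal_eq_zero, not_le]; positivity
  rw [hvA, h4R] at hIntg
  have hfin : ENNReal.ofReal (R ^ l) * ω * ‖w x₀ - b‖ₑ ^ p ≤ ENNReal.ofReal (R ^ l) * ω *
      (ENNReal.ofReal (4 ^ p) * c₁ * c₂ / ω * ENNReal.ofReal R * I) := by
    calc _ = ‖w x₀ - b‖ₑ ^ p * (ENNReal.ofReal (R ^ l) * ω) := by ring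
      _ ≤ _ := hIntg
      _ = ENNReal.ofReal (R ^ l) * (ω * ω⁻¹) *
          (ENNReal.ofReal (4 ^ p) * c₁ * c₂ * ENNReal.ofReal R * I) := by
          rw [ENNReal.mul_inv_cancel hω0 hωt]; ring
      _ = _ := by rw [div_eq_mul_inv]; ring
  exact (ENNReal.mul_le_mul_iff_right (mul_ne_zero hRl0 hω0) (by finiteness)).1 hfin

/-- If all values on a dome were close to `b`, the boundary datum would be null-homotopic. -/
lemma dome_far {l ν : ℕ} {N W : Set (EuclideanSpace ℝ (Fin ν))} {b : EuclideanSpace ℝ (Fin ν)}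
    {ρ : EuclideanSpace ℝ (Fin ν) → EuclideanSpace ℝ (Fin ν)}
    (hNW : N ⊆ W) (hρ : ContinuousOn ρ W) (hρN : MapsTo ρ W N)
    (hρid : ∀ y ∈ N, ρ y = y) (hb : b ∈ N) {δ : ℝ} (hδ : 0 < δ) (hδW : ball b δ ⊆ W)
    {f : EuclideanSpace ℝ (Fin l) → EuclideanSpace ℝ (Fin ν)}
    (hfb : ∀ x, 1 ≤ ‖x‖ → f x = b) (hf : ¬ NullHtpy N b f)
    {ε ρ₀ r : ℝ} (hε : 0 < ε) (hρ₀ : ρ₀ ≤ 1) (hr : 2 * ε < r) (hrρ : r < ρ₀)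
    {V : EuclideanSpace ℝ (Fin l) × ℝ → EuclideanSpace ℝ (Fin ν)}
    (hV : ContinuousOn V (closedBall 0 ρ₀ ×ˢ Icc (0 : ℝ) 1))
    (hVN : MapsTo V (closedBall 0 ρ₀ ×ˢ Icc (0 : ℝ) 1) N)
    (hV0 : ∀ x, ‖x‖ ≤ ρ₀ → V (x, 0) = f (ε⁻¹ • x)) :
    ∃ x₀ : EuclideanSpace ℝ (Fin l), ‖x₀‖ < √(r ^ 2 - ε ^ 2) ∧
      δ ≤ ‖V (x₀, r - √(‖x₀‖ ^ 2 + ε ^ 2)) - b‖ := by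
  by_contra hcon
  push Not at hcon
  apply hf
  set R := √(r ^ 2 - ε ^ 2) with hR
  have hRε : ε ≤ R := Real.le_sqrt_of_sq_le (by nlinarith)
  have hR0 : 0 < R := hε.trans_le hRε
  have hRr : R ≤ r := by
    rw [hR]; exact Real.sqrt_le_iff.2 ⟨by linarith, by nlinarith⟩
  have hR2 : R ^ 2 = r ^ 2 - ε ^ 2 := Real.sq_sqrt (by nlinarith)
  let P : EuclideanSpace ℝ (Fin l) → EuclideanSpace ℝ (Fin l) :=
    fun x => (R / max R ‖ε • x‖) • (ε • x)
  have hmax : ∀ x : EuclideanSpace ℝ (Fin l), 0 < max R ‖ε • x‖ := fun x =>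
    lt_max_of_lt_left hR0
  have hPc : Continuous P := by
    refine Continuous.smul (Continuous.div continuous_const (by fun_prop) fun x => (hmax x).ne')
      (by fun_prop)
  have hPn : ∀ x, ‖P x‖ ≤ R := by
    intro x
    simp only [P]
    rw [norm_smul, Real.norm_of_nonneg (div_nonneg hR0.le (hmax x).le), div_mul_eq_mul_div,
      div_le_iff₀ (hmax x)]
    exact mul_le_mul_of_nonneg_left (le_max_right _ _) hR0.le
  have hPfar : ∀ x, R ≤ ‖ε • x‖ → ‖P x‖ = R := by
    intro x hx
    have h0 : ‖ε • x‖ ≠ 0 := by linarith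
    simp only [P]
    rw [norm_smul, Real.norm_of_nonneg (div_nonneg hR0.le (hmax x).le), max_eq_right hx]
    field_simp
  have hPnear : ∀ x, ‖ε • x‖ ≤ R → P x = ε • x := by
    intro x hx
    simp only [P]
    rw [max_eq_left hx, div_self hR0.ne', one_smul]
  let H : EuclideanSpace ℝ (Fin l) → ℝ := fun x => r - √(‖P x‖ ^ 2 + ε ^ 2)
  have hHc : Continuous H := by fun_prop
  have hH0 : ∀ x, 0 ≤ H x := by
    intro x
    have : √(‖P x‖ ^ 2 + ε ^ 2) ≤ r := by
      rw [Real.sqrt_le_iff]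
      refine ⟨by linarith, ?_⟩
      have := pow_le_pow_left₀ (norm_nonneg _) (hPn x) 2
      linarith
    simp only [H]; linarith
  have hH1 : ∀ x, H x ≤ 1 := by
    intro x
    have := Real.sqrt_nonneg (‖P x‖ ^ 2 + ε ^ 2)
    simp only [H]; linarith
  have hHR : ∀ x, ‖P x‖ = R → H x = 0 := by
    intro x hx
    simp only [H]
    rw [hx, hR2, sub_add_cancel, Real.sqrt_sq (by linarith), sub_self]
  have hVR : ∀ x, ‖P x‖ = R → V (P x, 0) = b := by
    intro x hx
    rw [hV0 _ (by linarith)]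
    apply hfb
    rw [norm_smul, hx, Real.norm_of_nonneg (by positivity), inv_mul_eq_div, one_le_div hε]
    exact hRε
  have hVclose : ∀ x, ‖V (P x, H x) - b‖ < δ := by
    intro x
    rcases (hPn x).lt_or_eq with h | h
    · exact hcon _ h
    · rw [hHR x h, hVR x h]; simpa using hδ
  let α : ℝ → ℝ := fun s => min (2 * s) 1
  let β : ℝ → ℝ := fun s => max (2 * s - 1) 0
  have hαc : Continuous α := by fun_prop
  have hβc : Continuous β := by fun_prop
  let Q : EuclideanSpace ℝ (Fin l) × ℝ → EuclideanSpace ℝ (Fin l) × ℝ :=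
    fun z => (P z.1, α z.2 * H z.1)
  have hQc : Continuous Q := by fun_prop
  have hQm : MapsTo Q (univ ×ˢ Icc (0 : ℝ) 1) (closedBall 0 ρ₀ ×ˢ Icc (0 : ℝ) 1) := by
    rintro ⟨x, s⟩ ⟨-, hs⟩
    simp only at hs
    have h1 : 0 ≤ α s := le_min (by linarith [hs.1]) zero_le_one
    have h2 : α s ≤ 1 := min_le_right _ _
    refine ⟨?_, ?_, ?_⟩
    · simp only [Q, mem_closedBall_zero_iff]; linarith [hPn x]
    · exact mul_nonneg h1 (hH0 x)
    · exact mul_le_one₀ h2 (hH0 x) (hH1 x)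
  let Y : EuclideanSpace ℝ (Fin l) × ℝ → EuclideanSpace ℝ (Fin ν) :=
    fun z => (1 - β z.2) • V (Q z) + β z.2 • b
  have hYc : ContinuousOn Y (univ ×ˢ Icc (0 : ℝ) 1) := by
    have := hV.comp hQc.continuousOn hQm
    refine ContinuousOn.add (ContinuousOn.smul (f := fun z : _ × ℝ => 1 - β z.2)
      (Continuous.continuousOn (by fun_prop)) this) (Continuous.continuousOn (by fun_prop))
  have hYm : MapsTo Y (univ ×ˢ Icc (0 : ℝ) 1) W := by
    rintro ⟨x, s⟩ hz
    obtain ⟨-, hs⟩ := id hz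
    simp only at hs
    rcases le_total s (1 / 2) with h | h
    · have hβ : β s = 0 := max_eq_right (by linarith)
      simp only [Y, hβ]
      simp only [sub_zero, one_smul, zero_smul, add_zero]
      exact hNW (hVN (hQm hz))
    · have hα : α s = 1 := min_eq_right (by linarith)
      have hβ0 : 0 ≤ β s := le_max_right _ _
      have hβ1 : β s ≤ 1 := max_le (by linarith [hs.2]) zero_le_one
      apply hδW
      rw [mem_ball_iff_norm]
      have : Y (x, s) - b = (1 - β s) • (V (P x, H x) - b) := by
        simp only [Y, Q, hα, one_mul]; module
      rw [this, norm_smul, Real.norm_of_nonneg (by linarith)]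
      refine lt_of_le_of_lt ?_ (hVclose x)
      exact mul_le_of_le_one_left (norm_nonneg _) (by linarith)
  refine ⟨R / ε, fun z => ρ (Y z), hρ.comp hYc hYm, fun x s hs => hρN (hYm ⟨mem_univ _, hs⟩),
    fun x => ?_, fun x => ?_, fun x s hs hx => ?_⟩
  · have hα : α 0 = 0 := by simp [α]
    have hβ : β 0 = 0 := by simp [β]
    have hY : Y (x, 0) = V (P x, 0) := by simp [Y, Q, hα, hβ]
    have hm : V (P x, 0) ∈ N := by
      rw [← hY]
      have := hVN (hQm (x := (x, 0)) ⟨mem_univ _, by simp⟩)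
      simpa [Y, Q, hα, hβ] using this
    simp only [hY]
    rw [hρid _ hm]
    rcases le_total ‖ε • x‖ R with h | h
    · rw [hPnear x h, hV0 _ (by linarith), smul_smul, inv_mul_cancel₀ hε.ne', one_smul]
    · rw [hVR x (hPfar x h)]
      symm; apply hfb
      rw [norm_smul, Real.norm_of_nonneg hε.le] at h
      by_contra hlt
      push Not at hlt
      nlinarith
  · have hβ : β 1 = 1 := by simp only [β]; norm_num
    have hY : Y (x, 1) = b := by simp [Y, hβ]
    simp only [hY]
    exact hρid b hb
  · have hx' : R ≤ ‖ε • x‖ := by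
      rw [norm_smul, Real.norm_of_nonneg hε.le]
      rw [div_le_iff₀ hε] at hx; linarith
    have h := hPfar x hx'
    have hY : Y (x, s) = b := by
      simp only [Y, Q, hHR x h, mul_zero, hVR x h]; module
    simp only [hY]
    exact hρid b hb

lemma lipschitz_dome {l : ℕ} (r : ℝ) {ε : ℝ} (hε : 0 < ε) :
    LipschitzWith 1 (fun x : EuclideanSpace ℝ (Fin l) => (x, r - √(‖x‖ ^ 2 + ε ^ 2))) := by
  have h1 : LipschitzWith 1 (fun x : EuclideanSpace ℝ (Fin l) => √(‖x‖ ^ 2 + ε ^ 2)) := by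
    refine LipschitzWith.of_le_add fun x y => ?_
    have hd : 0 ≤ dist x y := dist_nonneg
    have hy := Real.sqrt_nonneg (‖y‖ ^ 2 + ε ^ 2)
    rw [Real.sqrt_le_iff]
    refine ⟨by linarith, ?_⟩
    have h2 : ‖x‖ ≤ ‖y‖ + dist x y := by
      rw [dist_eq_norm]; have := norm_add_le y (x - y); simpa using this
    have h3 : ‖y‖ ≤ √(‖y‖ ^ 2 + ε ^ 2) := Real.le_sqrt_of_sq_le (by nlinarith)
    have h4 : √(‖y‖ ^ 2 + ε ^ 2) ^ 2 = ‖y‖ ^ 2 + ε ^ 2 := Real.sq_sqrt (by positivity)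
    have h5 := norm_nonneg x
    have h6 := norm_nonneg y
    have h7 := pow_le_pow_left₀ h5 h2 2
    nlinarith
  have h2 : LipschitzWith 1 (fun x : EuclideanSpace ℝ (Fin l) => r - √(‖x‖ ^ 2 + ε ^ 2)) := by
    refine LipschitzWith.of_dist_le_mul fun x y => ?_
    have := h1.dist_le_mul x y
    rw [Real.dist_eq] at this ⊢
    rw [abs_sub_comm] at this
    convert this using 2
    ring
  simpa using LipschitzWith.id.prodMk h2

lemma dome_energy {l ν : ℕ} (hl : 1 ≤ l) (p : ℝ) (hp : p = (l : ℝ) + 1) :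
    ∃ C : ℝ≥0∞, C ≠ ⊤ ∧ ∀ {N W : Set (EuclideanSpace ℝ (Fin ν))} {b : EuclideanSpace ℝ (Fin ν)}
    {ρ : EuclideanSpace ℝ (Fin ν) → EuclideanSpace ℝ (Fin ν)}
    (_ : N ⊆ W) (_ : ContinuousOn ρ W) (_ : MapsTo ρ W N)
    (_ : ∀ y ∈ N, ρ y = y) (_ : b ∈ N) {δ : ℝ} (_ : 0 < δ) (_ : ball b δ ⊆ W)
    {f : EuclideanSpace ℝ (Fin l) → EuclideanSpace ℝ (Fin ν)}
    (_ : ∀ x, 1 ≤ ‖x‖ → f x = b) (_ : ¬ NullHtpy N b f)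
    {ε ρ₀ r : ℝ} (_ : 0 < ε) (_ : ρ₀ ≤ 1) (_ : 2 * ε < r) (_ : r < ρ₀)
    {V : EuclideanSpace ℝ (Fin l) × ℝ → EuclideanSpace ℝ (Fin ν)}
    {O : Set (EuclideanSpace ℝ (Fin l) × ℝ)} (_ : IsOpen O)
    (_ : closedBall 0 ρ₀ ×ˢ Icc (0 : ℝ) 1 ⊆ O) (_ : ContDiffOn ℝ 1 V O)
    (_ : MapsTo V (closedBall 0 ρ₀ ×ˢ Icc (0 : ℝ) 1) N)
    (_ : ∀ x, ‖x‖ ≤ ρ₀ → V (x, 0) = f (ε⁻¹ • x)),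
    ENNReal.ofReal δ ^ p ≤ C * ENNReal.ofReal r * ∫⁻ x in ball 0 (√(r ^ 2 - ε ^ 2)),
      ‖fderiv ℝ V (x, r - √(‖x‖ ^ 2 + ε ^ 2))‖ₑ ^ p := by
  obtain ⟨C, hC, hmor⟩ := morrey (ν := ν) hl p hp
  refine ⟨C, hC, ?_⟩
  intro N W b ρ hNW hρ hρN hρid hb δ hδ hδW f hfb hf ε ρ₀ r hε hρ₀ hr hrρ V O hO hOs hV hVN hV0
  obtain ⟨x₀, hx₀, hx₀δ⟩ := dome_far hNW hρ hρN hρid hb hδ hδW hfb hf hε hρ₀ hr hrρ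
    (hV.continuousOn.mono hOs) hVN hV0
  set R := √(r ^ 2 - ε ^ 2) with hR
  have hRε : ε ≤ R := Real.le_sqrt_of_sq_le (by nlinarith)
  have hR0 : 0 < R := hε.trans_le hRε
  have hRr : R ≤ r := by
    rw [hR]; exact Real.sqrt_le_iff.2 ⟨by linarith, by nlinarith⟩
  have hR2 : R ^ 2 = r ^ 2 - ε ^ 2 := Real.sq_sqrt (by nlinarith)
  let G : EuclideanSpace ℝ (Fin l) → EuclideanSpace ℝ (Fin l) × ℝ :=
    fun x => (x, r - √(‖x‖ ^ 2 + ε ^ 2))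
  have hGL : LipschitzWith 1 G := lipschitz_dome r hε
  have hGs : ContDiff ℝ 1 G := by
    refine contDiff_id.prodMk (contDiff_const.sub ?_)
    refine ContDiff.sqrt ((contDiff_norm_sq ℝ).add contDiff_const) fun x => ?_
    positivity
  have hGm : ∀ x, ‖x‖ ≤ R → G x ∈ closedBall 0 ρ₀ ×ˢ Icc (0 : ℝ) 1 := by
    intro x hx
    have h1 : √(‖x‖ ^ 2 + ε ^ 2) ≤ r := by
      rw [Real.sqrt_le_iff]
      refine ⟨by linarith, ?_⟩
      have := pow_le_pow_left₀ (norm_nonneg _) hx 2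
      linarith
    have h2 := Real.sqrt_nonneg (‖x‖ ^ 2 + ε ^ 2)
    refine ⟨?_, ?_, ?_⟩
    · simp only [G, mem_closedBall_zero_iff]; linarith
    · simp only [G]; linarith
    · simp only [G]; linarith
  have hfin := hmor R hR0 (fun x => V (G x)) b (G ⁻¹' O) (hO.preimage hGs.continuous)
    (fun x hx => hOs (hGm x (by simpa using hx)))
    (hV.comp hGs.contDiffOn (fun x hx => hx))
    (fun x hx => by
      have h0 : G x = (x, 0) := by
        simp only [G]
        rw [hx, hR2, sub_add_cancel, Real.sqrt_sq (by linarith), sub_self]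
      simp only [h0]
      rw [hV0 _ (by linarith)]
      apply hfb
      rw [norm_smul, hx, Real.norm_of_nonneg (by positivity), inv_mul_eq_div, one_le_div hε]
      exact hRε)
    (fun x => ‖fderiv ℝ V (G x)‖ₑ)
    (((measurable_fderiv ℝ V).comp hGs.continuous.measurable).enorm)
    (fun x hx => by
      have hxO : G x ∈ O := hOs (hGm x (by simpa using (mem_ball_zero_iff.1 hx).le))
      have hd : DifferentiableAt ℝ V (G x) :=
        (hV.contDiffAt (hO.mem_nhds hxO)).differentiableAt (by norm_num)
      have hG : DifferentiableAt ℝ G x := hGs.differentiable (by norm_num) x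
      have e : fderiv ℝ (fun x => V (G x)) x = (fderiv ℝ V (G x)).comp (fderiv ℝ G x) :=
        fderiv_comp x hd hG
      rw [e]
      have h1 : ‖fderiv ℝ G x‖ ≤ 1 := by simpa using norm_fderiv_le_of_lipschitz ℝ hGL (x₀ := x)
      rw [← ofReal_norm, ← ofReal_norm]
      apply ENNReal.ofReal_le_ofReal
      refine (ContinuousLinearMap.opNorm_comp_le _ _).trans ?_
      exact mul_le_of_le_one_right (norm_nonneg _) h1)
    x₀ hx₀
  have hp0 : 0 ≤ p := by rw [hp]; positivity
  calc ENNReal.ofReal δ ^ p ≤ ‖V (G x₀) - b‖ₑ ^ p := by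
        gcongr
        rw [← ofReal_norm]
        exact ENNReal.ofReal_le_ofReal hx₀δ
    _ ≤ _ := hfin
    _ ≤ _ := by gcongr

lemma dome_tonelli {l : ℕ} {ε ρ₀ : ℝ} (hε : 0 < ε) (hρ₀ : ρ₀ ≤ 1)
    (G : EuclideanSpace ℝ (Fin l) × ℝ → ℝ≥0∞) (hG : Measurable G) :
    ∫⁻ r in Ioo (2 * ε) ρ₀, ∫⁻ x in ball (0 : EuclideanSpace ℝ (Fin l)) (√(r ^ 2 - ε ^ 2)),
      G (x, r - √(‖x‖ ^ 2 + ε ^ 2)) ≤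
    ∫⁻ x in ball (0 : EuclideanSpace ℝ (Fin l)) ρ₀, ∫⁻ t in Ioo (0 : ℝ) 1, G (x, t) := by
  set G' : EuclideanSpace ℝ (Fin l) × ℝ → ℝ≥0∞ := (univ ×ˢ Ioo (0 : ℝ) 1).indicator G with hG'
  have hG'm : Measurable G' := hG.indicator (MeasurableSet.univ.prod measurableSet_Ioo)
  have hG'e : ∀ x t, G' (x, t) = (Ioo (0 : ℝ) 1).indicator (fun t => G (x, t)) t := by
    intro x t
    by_cases ht : t ∈ Ioo (0 : ℝ) 1
    · rw [hG', indicator_of_mem ht, indicator_of_mem (show (x, t) ∈ univ ×ˢ Ioo (0 : ℝ) 1 from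
        ⟨mem_univ _, ht⟩)]
    · rw [hG', indicator_of_notMem ht, indicator_of_notMem (fun h => ht h.2)]
  have hm2 : Measurable (fun z : ℝ × EuclideanSpace ℝ (Fin l) =>
      G' (z.2, z.1 - √(‖z.2‖ ^ 2 + ε ^ 2))) := hG'm.comp (by fun_prop)
  calc ∫⁻ r in Ioo (2 * ε) ρ₀, ∫⁻ x in ball (0 : EuclideanSpace ℝ (Fin l)) (√(r ^ 2 - ε ^ 2)),
      G (x, r - √(‖x‖ ^ 2 + ε ^ 2))
      ≤ ∫⁻ r in Ioo (2 * ε) ρ₀, ∫⁻ x in ball (0 : EuclideanSpace ℝ (Fin l)) ρ₀,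
        G' (x, r - √(‖x‖ ^ 2 + ε ^ 2)) := by
        refine setLIntegral_mono' measurableSet_Ioo fun r hr => ?_
        have hr0 : 0 < r := by linarith [hr.1]
        have hRr : √(r ^ 2 - ε ^ 2) ≤ ρ₀ :=
          (Real.sqrt_le_iff.2 ⟨hr0.le, by nlinarith⟩).trans hr.2.le
        refine le_trans ?_ (lintegral_mono_set (ball_subset_ball hRr))
        refine setLIntegral_mono' measurableSet_ball fun x hx => le_of_eq ?_
        rw [hG'e, indicator_of_mem]
        rw [mem_ball_zero_iff, Real.lt_sqrt (norm_nonneg _)] at hx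
        have h1 : √(‖x‖ ^ 2 + ε ^ 2) < r := by
          rw [Real.sqrt_lt' hr0]; linarith
        have h2 : 0 < √(‖x‖ ^ 2 + ε ^ 2) := Real.sqrt_pos.2 (by positivity)
        exact ⟨by linarith, by linarith [hr.2]⟩
    _ ≤ ∫⁻ r, ∫⁻ x in ball (0 : EuclideanSpace ℝ (Fin l)) ρ₀,
        G' (x, r - √(‖x‖ ^ 2 + ε ^ 2)) := setLIntegral_le_lintegral _ _
    _ = ∫⁻ x in ball (0 : EuclideanSpace ℝ (Fin l)) ρ₀, ∫⁻ r : ℝ,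
        G' (x, r - √(‖x‖ ^ 2 + ε ^ 2)) := lintegral_lintegral_swap hm2.aemeasurable
    _ = ∫⁻ x in ball (0 : EuclideanSpace ℝ (Fin l)) ρ₀, ∫⁻ t in Ioo (0 : ℝ) 1, G (x, t) := by
        congr 1; ext x
        rw [lintegral_sub_right_eq_self (fun t => G' (x, t))]
        simp_rw [hG'e]
        rw [lintegral_indicator measurableSet_Ioo]

lemma lintegral_inv_Ioo {a c : ℝ} (ha : 0 < a) (hc : a < c) :
    ∫⁻ r in Ioo a c, ENNReal.ofReal r⁻¹ = ENNReal.ofReal (Real.log (c / a)) := by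
  rw [← integral_inv_of_pos ha (ha.trans hc), intervalIntegral.integral_of_le hc.le,
    integral_Ioc_eq_integral_Ioo, ofReal_integral_eq_lintegral_ofReal]
  · have : IntervalIntegrable (fun x : ℝ => x⁻¹) volume a c := by
      apply intervalIntegral.intervalIntegrable_inv (fun x hx => ?_) continuousOn_id
      rw [uIcc_of_le hc.le] at hx
      exact (ha.trans_le hx.1).ne'
    exact ((intervalIntegrable_iff_integrableOn_Ioo_of_le hc.le).1 this)
  · filter_upwards [ae_restrict_mem measurableSet_Ioo] with x hx
    exact inv_nonneg.2 (ha.trans hx.1).le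

/-- Logarithmic lower bound for the energy of any extension, in a fixed slice. -/
lemma dome_log {l ν : ℕ} (hl : 1 ≤ l) (p : ℝ) (hp : p = (l : ℝ) + 1) :
    ∃ C : ℝ≥0∞, C ≠ ⊤ ∧ ∀ {N W : Set (EuclideanSpace ℝ (Fin ν))} {b : EuclideanSpace ℝ (Fin ν)}
    {ρ : EuclideanSpace ℝ (Fin ν) → EuclideanSpace ℝ (Fin ν)}
    (_ : N ⊆ W) (_ : ContinuousOn ρ W) (_ : MapsTo ρ W N)
    (_ : ∀ y ∈ N, ρ y = y) (_ : b ∈ N) {δ : ℝ} (_ : 0 < δ) (_ : ball b δ ⊆ W)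
    {f : EuclideanSpace ℝ (Fin l) → EuclideanSpace ℝ (Fin ν)}
    (_ : ∀ x, 1 ≤ ‖x‖ → f x = b) (_ : ¬ NullHtpy N b f)
    {ε ρ₀ : ℝ} (_ : 0 < ε) (_ : ρ₀ ≤ 1) (_ : 2 * ε < ρ₀)
    {V : EuclideanSpace ℝ (Fin l) × ℝ → EuclideanSpace ℝ (Fin ν)}
    {O : Set (EuclideanSpace ℝ (Fin l) × ℝ)} (_ : IsOpen O)
    (_ : closedBall 0 ρ₀ ×ˢ Icc (0 : ℝ) 1 ⊆ O) (_ : ContDiffOn ℝ 1 V O)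
    (_ : MapsTo V (closedBall 0 ρ₀ ×ˢ Icc (0 : ℝ) 1) N)
    (_ : ∀ x, ‖x‖ ≤ ρ₀ → V (x, 0) = f (ε⁻¹ • x)),
    ENNReal.ofReal δ ^ p * ENNReal.ofReal (Real.log (ρ₀ / (2 * ε))) ≤
      C * ∫⁻ x in ball 0 ρ₀, ∫⁻ t in Ioo (0 : ℝ) 1, ‖fderiv ℝ V (x, t)‖ₑ ^ p := by
  obtain ⟨C, hC, hdome⟩ := dome_energy (ν := ν) hl p hp
  refine ⟨C, hC, ?_⟩
  intro N W b ρ hNW hρ hρN hρid hb δ hδ hδW f hfb hf ε ρ₀ hε hρ₀ hr V O hO hOs hV hVN hV0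
  have hGm : Measurable (fun z => ‖fderiv ℝ V z‖ₑ ^ p) :=
    ((measurable_fderiv ℝ V).enorm).pow_const p
  rw [← lintegral_inv_Ioo (by linarith) hr, ← lintegral_const_mul _ (by fun_prop)]
  refine le_trans ?_ (mul_le_mul_right (dome_tonelli hε hρ₀ _ hGm) C)
  rw [← lintegral_const_mul' _ _ hC]
  refine setLIntegral_mono' measurableSet_Ioo fun r hrr => ?_
  have hr0 : 0 < r := by linarith [hrr.1]
  have h := hdome hNW hρ hρN hρid hb hδ hδW hfb hf hε hρ₀ hrr.1 hrr.2 hO hOs hV hVN hV0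
  calc ENNReal.ofReal δ ^ p * ENNReal.ofReal r⁻¹ ≤ _ := mul_le_mul_left h _
    _ = C * (∫⁻ x in ball 0 (√(r ^ 2 - ε ^ 2)),
      ‖fderiv ℝ V (x, r - √(‖x‖ ^ 2 + ε ^ 2))‖ₑ ^ p) *
        (ENNReal.ofReal r * ENNReal.ofReal r⁻¹) := by ring
    _ = _ := by
      rw [← ENNReal.ofReal_mul hr0.le, mul_inv_cancel₀ hr0.ne', ENNReal.ofReal_one, mul_one]


lemma kernel_finite {n : ℕ} (hn : 1 ≤ n) {t p D A : ℝ} (ht : 0 < t) (hp : p = t + 1)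
    (hD : 0 ≤ D) (hA : 0 ≤ A) :
    ∫⁻ h : EuclideanSpace ℝ (Fin n),
      ENNReal.ofReal (min D (A * ‖h‖) ^ p / ‖h‖ ^ ((n : ℝ) + t)) ≠ ⊤ := by
  have : Nonempty (Fin n) := ⟨⟨0, hn⟩⟩
  set φ : ℝ → ℝ := fun y => min D (A * y) ^ p / y ^ ((n : ℝ) + t) with hφ
  have hp0 : 0 < p := by linarith
  have hIntg : Integrable (fun x : EuclideanSpace ℝ (Fin n) => φ ‖x‖) volume := by
    rw [integrable_fun_norm_addHaar, finrank_euclideanSpace_fin]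
    have hm : Measurable (fun y : ℝ => y ^ (n - 1) • φ y) := by
      simp only [hφ, smul_eq_mul]; fun_prop
    have h1 : IntegrableOn (fun y : ℝ => y ^ (n - 1) • φ y) (Ioc 0 1) volume := by
      refine Measure.integrableOn_of_bounded (M := A ^ p) (by simp) hm.aestronglyMeasurable ?_
      filter_upwards [ae_restrict_mem measurableSet_Ioc] with y hy
      have hy0 := hy.1
      have hmin : 0 ≤ min D (A * y) := le_min hD (by positivity)
      rw [Real.norm_of_nonneg (by simp only [hφ, smul_eq_mul]; positivity)]
      simp only [hφ, smul_eq_mul]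
      have e1 : min D (A * y) ^ p ≤ A ^ p * y ^ p := by
        rw [← Real.mul_rpow hA hy0.le]
        exact Real.rpow_le_rpow hmin (min_le_right _ _) hp0.le
      have e2 : y ^ (n - 1) * (A ^ p * y ^ p / y ^ ((n : ℝ) + t)) = A ^ p := by
        rw [← Real.rpow_natCast y (n - 1), Nat.cast_sub hn]
        have : (y ^ ((n : ℝ) - (1 : ℕ)) * y ^ p) = y ^ ((n : ℝ) + t) := by
          rw [← Real.rpow_add hy0, hp]; congr 1; push_cast; ring
        have hpos : 0 < y ^ ((n : ℝ) + t) := by positivity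
        field_simp
        rw [← this]; ring
      calc _ ≤ y ^ (n - 1) * (A ^ p * y ^ p / y ^ ((n : ℝ) + t)) := by gcongr
        _ = _ := e2
    have h2 : IntegrableOn (fun y : ℝ => y ^ (n - 1) • φ y) (Ioi 1) volume := by
      have hb : IntegrableOn (fun y : ℝ => D ^ p * y ^ (-1 - t)) (Ioi 1) volume :=
        (integrableOn_Ioi_rpow_of_lt (by linarith) one_pos).const_mul _
      refine Integrable.mono' hb hm.aestronglyMeasurable ?_
      filter_upwards [ae_restrict_mem measurableSet_Ioi] with y hy
      have hy0 : 0 < y := one_pos.trans hy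
      have hmin : 0 ≤ min D (A * y) := le_min hD (by positivity)
      rw [Real.norm_of_nonneg (by simp only [hφ, smul_eq_mul]; positivity)]
      simp only [hφ, smul_eq_mul]
      have e1 : min D (A * y) ^ p ≤ D ^ p := Real.rpow_le_rpow hmin (min_le_left _ _) hp0.le
      have e2 : y ^ (n - 1) * (D ^ p / y ^ ((n : ℝ) + t)) = D ^ p * y ^ (-1 - t) := by
        rw [← Real.rpow_natCast y (n - 1), Nat.cast_sub hn, div_eq_mul_inv, ← Real.rpow_neg hy0.le,
          mul_left_comm, ← Real.rpow_add hy0]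
        congr 2; push_cast; ring
      calc _ ≤ y ^ (n - 1) * (D ^ p / y ^ ((n : ℝ) + t)) := by gcongr
        _ = _ := e2
    have := h1.union h2
    rwa [Ioc_union_Ioi_eq_Ioi zero_le_one] at this
  have := hIntg.2
  rw [hasFiniteIntegral_iff_ofReal] at this
  · exact this.ne
  · refine Eventually.of_forall fun x => ?_
    have : 0 ≤ min D (A * ‖x‖) := le_min hD (by positivity)
    simp only [hφ, Pi.zero_apply]
    positivity

lemma kernel_scale {n : ℕ} {t p D A ε : ℝ} (hε : 0 < ε) :
    ∫⁻ h : EuclideanSpace ℝ (Fin n),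
      ENNReal.ofReal (min D (A / ε * ‖h‖) ^ p / ‖h‖ ^ ((n : ℝ) + t)) =
    ENNReal.ofReal (ε ^ (-t)) * ∫⁻ h : EuclideanSpace ℝ (Fin n),
      ENNReal.ofReal (min D (A * ‖h‖) ^ p / ‖h‖ ^ ((n : ℝ) + t)) := by
  set Ψ : EuclideanSpace ℝ (Fin n) → ℝ≥0∞ := fun h =>
    ENNReal.ofReal (min D (A * ‖h‖) ^ p / ‖h‖ ^ ((n : ℝ) + t)) with hΨ
  have hm : Measurable Ψ := by simp only [hΨ]; fun_prop
  have hs := lintegral_translate_scale Ψ hm 0 (inv_pos.2 hε)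
  have hpt : ∀ h : EuclideanSpace ℝ (Fin n),
      ENNReal.ofReal (min D (A / ε * ‖h‖) ^ p / ‖h‖ ^ ((n : ℝ) + t)) =
      ENNReal.ofReal (ε ^ (-((n : ℝ) + t))) * Ψ (0 + ε⁻¹ • h) := by
    intro h
    simp only [hΨ]
    rw [← ENNReal.ofReal_mul (by positivity)]
    congr 1
    rw [zero_add, norm_smul, Real.norm_of_nonneg (inv_nonneg.2 hε.le),
      Real.mul_rpow (inv_nonneg.2 hε.le) (norm_nonneg _), Real.inv_rpow hε.le, Real.rpow_neg hε.le,
      show A * (ε⁻¹ * ‖h‖) = A / ε * ‖h‖ by field_simp]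
    have : 0 < ε ^ ((n : ℝ) + t) := by positivity
    field_simp
  simp_rw [hpt]
  have hm' : Measurable fun h : EuclideanSpace ℝ (Fin n) => Ψ (0 + ε⁻¹ • h) :=
    hm.comp (by fun_prop)
  rw [lintegral_const_mul _ hm', hs, ← mul_assoc,
    ← ENNReal.ofReal_mul (by positivity)]
  congr 2
  rw [inv_pow, inv_inv, ← Real.rpow_natCast, ← Real.rpow_add hε]
  congr 1; ring

lemma gagliardo_upper {n ν : ℕ} {s p t D A ε : ℝ} (hp : 0 < p) (hst : s * p = t) (hε : 0 < ε)
    (u : EuclideanSpace ℝ (Fin n) → EuclideanSpace ℝ (Fin ν)) (b : EuclideanSpace ℝ (Fin ν))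
    (S : Set (EuclideanSpace ℝ (Fin n))) (hS : MeasurableSet S) (huS : ∀ x, x ∉ S → u x = b)
    (hD : ∀ x y, ‖u y - u x‖ ≤ D) (hA : ∀ x y, ‖u y - u x‖ ≤ A / ε * ‖y - x‖) :
    gagliardoE s p (ball 0 1) u ≤ 2 * volume (S ∩ ball 0 1) * (ENNReal.ofReal (ε ^ (-t)) *
      ∫⁻ h : EuclideanSpace ℝ (Fin n),
        ENNReal.ofReal (min D (A * ‖h‖) ^ p / ‖h‖ ^ ((n : ℝ) + t))) := by
  rw [← kernel_scale hε]
  set Ψ : EuclideanSpace ℝ (Fin n) → ℝ≥0∞ := fun h =>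
    ENNReal.ofReal (min D (A / ε * ‖h‖) ^ p / ‖h‖ ^ ((n : ℝ) + t)) with hΨ
  have hm : Measurable Ψ := by simp only [hΨ]; fun_prop
  set B : Set (EuclideanSpace ℝ (Fin n)) := ball 0 1 with hB
  set T : EuclideanSpace ℝ (Fin n) → ℝ≥0∞ := S.indicator 1 with hT
  have hTm : Measurable T := measurable_one.indicator hS
  have hpt : ∀ x y, ENNReal.ofReal (‖u y - u x‖ ^ p / ‖y - x‖ ^ ((n : ℝ) + s * p)) ≤
      T x * Ψ (y - x) + T y * Ψ (y - x) := by
    intro x y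
    have hle : ENNReal.ofReal (‖u y - u x‖ ^ p / ‖y - x‖ ^ ((n : ℝ) + s * p)) ≤ Ψ (y - x) := by
      rw [hst]
      apply ENNReal.ofReal_le_ofReal
      gcongr
      exact le_min (hD x y) (hA x y)
    by_cases hx : x ∈ S
    · have : T x = 1 := by simp [hT, hx]
      rw [this, one_mul]
      exact hle.trans le_self_add
    · by_cases hy : y ∈ S
      · have : T y = 1 := by simp [hT, hy]
        rw [this, one_mul]
        exact hle.trans le_add_self
      · rw [huS x hx, huS y hy, sub_self, norm_zero, Real.zero_rpow hp.ne', zero_div,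
          ENNReal.ofReal_zero]
        exact zero_le
  have hTB : ∫⁻ x in B, T x = volume (S ∩ B) := by
    rw [hT, lintegral_indicator_one hS, Measure.restrict_apply hS]
  have hm1 : Measurable fun z : EuclideanSpace ℝ (Fin n) × EuclideanSpace ℝ (Fin n) =>
      T z.1 * Ψ (z.2 - z.1) :=
    (hTm.comp measurable_fst).mul (hm.comp (measurable_snd.sub measurable_fst))
  have hm2 : Measurable fun z : EuclideanSpace ℝ (Fin n) × EuclideanSpace ℝ (Fin n) =>
      T z.2 * Ψ (z.2 - z.1) :=
    (hTm.comp measurable_snd).mul (hm.comp (measurable_snd.sub measurable_fst))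
  have i1 : ∫⁻ x in B, ∫⁻ y in B, T x * Ψ (y - x) ≤ volume (S ∩ B) * ∫⁻ h, Ψ h := by
    calc _ ≤ ∫⁻ x in B, T x * ∫⁻ h, Ψ h := by
          refine lintegral_mono fun x => ?_
          have hmx : Measurable fun y => Ψ (y - x) := hm.comp (measurable_id.sub_const x)
          rw [lintegral_const_mul _ hmx]
          refine mul_le_mul_right ((setLIntegral_le_lintegral _ _).trans (le_of_eq ?_)) _
          exact lintegral_sub_right_eq_self Ψ x
      _ = _ := by rw [lintegral_mul_const _ hTm, hTB]
  have i2 : ∫⁻ x in B, ∫⁻ y in B, T y * Ψ (y - x) ≤ volume (S ∩ B) * ∫⁻ h, Ψ h := by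
    rw [lintegral_lintegral_swap hm2.aemeasurable]
    calc _ ≤ ∫⁻ y in B, T y * ∫⁻ h, Ψ h := by
          refine lintegral_mono fun y => ?_
          simp only
          have hmx : Measurable fun x => Ψ (y - x) := hm.comp (measurable_const.sub measurable_id)
          rw [lintegral_const_mul _ hmx]
          refine mul_le_mul_right ((setLIntegral_le_lintegral _ _).trans (le_of_eq ?_)) _
          exact lintegral_sub_left_eq_self Ψ y
      _ = _ := by rw [lintegral_mul_const _ hTm, hTB]
  calc gagliardoE s p B u ≤ ∫⁻ x in B, ∫⁻ y in B, (T x * Ψ (y - x) + T y * Ψ (y - x)) :=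
        lintegral_mono fun x => lintegral_mono fun y => hpt x y
    _ = ∫⁻ x in B, ((∫⁻ y in B, T x * Ψ (y - x)) + ∫⁻ y in B, T y * Ψ (y - x)) := by
        congr 1; ext x
        have hmx : Measurable fun y => T x * Ψ (y - x) :=
          hm1.comp (measurable_const.prodMk measurable_id)
        rw [lintegral_add_left hmx]
    _ = (∫⁻ x in B, ∫⁻ y in B, T x * Ψ (y - x)) + ∫⁻ x in B, ∫⁻ y in B, T y * Ψ (y - x) := by
        rw [lintegral_add_left]
        exact hm1.lintegral_prod_right'
    _ ≤ volume (S ∩ B) * (∫⁻ h, Ψ h) + volume (S ∩ B) * ∫⁻ h, Ψ h := add_le_add i1 i2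
    _ = _ := by ring

lemma pigeonhole {n l : ℕ} (g : EuclideanSpace ℝ (Fin n) → EuclideanSpace ℝ (Fin l))
    (hg : Continuous g) {ρ₀ : ℝ} (hρ₀ : 0 < ρ₀) :
    ∃ C : ℝ≥0∞, C ≠ ⊤ ∧ ∀ ε : ℝ, 0 < ε → ∃ c ∈ ball (0 : EuclideanSpace ℝ (Fin l)) ρ₀,
      volume ({z | ‖g z - c‖ < ε} ∩ ball 0 1) ≤ C * ENNReal.ofReal (ε ^ l) := by
  set B : Set (EuclideanSpace ℝ (Fin n)) := ball 0 1 with hB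
  set A : Set (EuclideanSpace ℝ (Fin l)) := ball 0 ρ₀ with hA
  set ω : ℝ≥0∞ := volume (ball (0 : EuclideanSpace ℝ (Fin l)) 1) with hω
  have hA0 : volume A ≠ 0 := (measure_ball_pos _ _ hρ₀).ne'
  have hAt : volume A ≠ ⊤ := measure_ball_lt_top.ne
  have hBt : volume B ≠ ⊤ := measure_ball_lt_top.ne
  have hωt : ω ≠ ⊤ := measure_ball_lt_top.ne
  refine ⟨volume B * ω / volume A, ENNReal.div_ne_top (by finiteness) hA0, fun ε hε => ?_⟩
  have hms : MeasurableSet {w : EuclideanSpace ℝ (Fin l) × EuclideanSpace ℝ (Fin n) |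
      ‖g w.2 - w.1‖ < ε} := by
    refine (isOpen_lt (by fun_prop) continuous_const).measurableSet
  have hmc : ∀ c, MeasurableSet {z : EuclideanSpace ℝ (Fin n) | ‖g z - c‖ < ε} := fun c =>
    (isOpen_lt (by fun_prop) continuous_const).measurableSet
  have hmz : ∀ z, MeasurableSet {c : EuclideanSpace ℝ (Fin l) | ‖g z - c‖ < ε} := fun c =>
    (isOpen_lt (by fun_prop) continuous_const).measurableSet
  set T : EuclideanSpace ℝ (Fin l) × EuclideanSpace ℝ (Fin n) → ℝ≥0∞ :=
    {w | ‖g w.2 - w.1‖ < ε}.indicator 1 with hT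
  have hTm : Measurable T := measurable_one.indicator hms
  have e1 : ∀ c, volume ({z | ‖g z - c‖ < ε} ∩ B) = ∫⁻ z in B, T (c, z) := by
    intro c
    rw [← Measure.restrict_apply (hmc c), ← lintegral_indicator_one (hmc c)]
    rfl
  have e2 : ∀ z, ∫⁻ c in A, T (c, z) ≤ ω * ENNReal.ofReal (ε ^ l) := by
    intro z
    calc ∫⁻ c in A, T (c, z) ≤ ∫⁻ c, T (c, z) := setLIntegral_le_lintegral _ _
      _ = ∫⁻ c, {c : EuclideanSpace ℝ (Fin l) | ‖g z - c‖ < ε}.indicator 1 c := rfl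
      _ = volume {c : EuclideanSpace ℝ (Fin l) | ‖g z - c‖ < ε} := lintegral_indicator_one (hmz z)
      _ = volume (ball (g z) ε) := by
          congr 1; ext c; rw [mem_ball', dist_eq_norm]; rfl
      _ = _ := by
          rw [Measure.addHaar_ball_of_pos _ _ hε, finrank_euclideanSpace_fin, mul_comm]
  have hmF : Measurable fun c => ∫⁻ z in B, T (c, z) := hTm.lintegral_prod_right'
  obtain ⟨c, hc, hle⟩ := exists_le_setLAverage (f := fun c => ∫⁻ z in B, T (c, z)) hA0 hAt
    hmF.aemeasurable
  refine ⟨c, hc, ?_⟩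
  rw [e1 c]
  refine hle.trans ?_
  rw [setLAverage_eq, lintegral_lintegral_swap (f := fun c z => T (c, z)) hTm.aemeasurable, div_eq_mul_inv, div_eq_mul_inv,
    mul_right_comm]
  gcongr
  calc ∫⁻ z in B, ∫⁻ c in A, T (c, z) ≤ ∫⁻ z in B, ω * ENNReal.ofReal (ε ^ l) :=
        lintegral_mono fun z => e2 z
    _ = _ := by rw [setLIntegral_const]; ring


/-- The standard identification `ℝ^l × ℝ^q ≃ ℝ^(l+q)`. -/
def LL (l q : ℕ) : (EuclideanSpace ℝ (Fin l) × EuclideanSpace ℝ (Fin q)) ≃L[ℝ]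
    EuclideanSpace ℝ (Fin (l + q)) :=
  (EuclideanSpace.finAddEquivProd (𝕜 := ℝ) (n := l) (m := q)).symm

lemma LL_measure (l q : ℕ) : ∃ κ : ℝ≥0∞, κ ≠ 0 ∧ κ ≠ ⊤ ∧
    ∀ G : EuclideanSpace ℝ (Fin (l + q)) → ℝ≥0∞, Measurable G →
      ∫⁻ z, G z = κ * ∫⁻ y, ∫⁻ x, G (LL l q (x, y)) := by
  let μ : Measure (EuclideanSpace ℝ (Fin (l + q))) := Measure.map (LL l q) (volume.prod volume)
  have hμ : μ.IsAddHaarMeasure := ContinuousLinearEquiv.isAddHaarMeasure_map (LL l q) _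
  have h := Measure.isAddLeftInvariant_eq_smul (volume : Measure (EuclideanSpace ℝ (Fin (l + q)))) μ
  set k := Measure.addHaarScalarFactor (volume : Measure (EuclideanSpace ℝ (Fin (l + q)))) μ
  refine ⟨k, ?_, by simp, ?_⟩
  · have := Measure.addHaarScalarFactor_pos_of_isAddHaarMeasure
      (volume : Measure (EuclideanSpace ℝ (Fin (l + q)))) μ
    simpa using this.ne'
  · intro G hG
    have hLm : Measurable (LL l q) := (LL l q).continuous.measurable
    have e : ∫⁻ z, G z ∂μ = ∫⁻ y, ∫⁻ x, G (LL l q (x, y)) := by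
      rw [lintegral_map hG hLm]
      exact lintegral_prod_symm' _ (hG.comp hLm)
    rw [← e]
    conv_lhs => rw [h]
    rw [lintegral_smul_measure]; rfl

lemma LL_bounds (l q : ℕ) : ∃ Λ : ℝ, 1 ≤ Λ ∧ (∀ w, ‖LL l q w‖ ≤ Λ * ‖w‖) ∧
    (∀ z, ‖(LL l q).symm z‖ ≤ Λ * ‖z‖) := by
  refine ⟨max 1 (max ‖(LL l q).toContinuousLinearMap‖ ‖(LL l q).symm.toContinuousLinearMap‖), le_max_left _ _,
    fun w => ?_, fun z => ?_⟩
  · refine ((LL l q).toContinuousLinearMap.le_opNorm w).trans ?_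
    gcongr
    exact (le_max_left _ _).trans (le_max_right _ _)
  · refine ((LL l q).symm.toContinuousLinearMap.le_opNorm z).trans ?_
    gcongr
    exact (le_max_right _ _).trans (le_max_right _ _)

lemma exists_g (l q : ℕ) (hl : 1 ≤ l) :
    ∃ (g : EuclideanSpace ℝ (Fin (l + q)) → EuclideanSpace ℝ (Fin l))
      (e : EuclideanSpace ℝ (Fin l)) (K : NNReal), ContDiff ℝ (⊤ : ℕ∞) g ∧ LipschitzWith K g ∧
      ‖e‖ = 1 ∧ (∀ z, 3 / 4 ≤ ‖z‖ → g z = e) ∧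
      (∀ z, ‖z‖ ≤ 1 / 2 → g z = ((LL l q).symm z).1) := by
  let χ : ContDiffBump (0 : EuclideanSpace ℝ (Fin (l + q))) :=
    ⟨1 / 2, 3 / 4, by norm_num, by norm_num⟩
  let e : EuclideanSpace ℝ (Fin l) := EuclideanSpace.single ⟨0, hl⟩ 1
  let Z : EuclideanSpace ℝ (Fin (l + q)) →L[ℝ] EuclideanSpace ℝ (Fin l) :=
    (ContinuousLinearMap.fst ℝ _ _).comp (LL l q).symm.toContinuousLinearMap
  let g₀ : EuclideanSpace ℝ (Fin (l + q)) → EuclideanSpace ℝ (Fin l) := fun z => χ z • (Z z - e)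
  have hg₀ : ContDiff ℝ (⊤ : ℕ∞) g₀ := by
    refine ContDiff.smul χ.contDiff (Z.contDiff.sub contDiff_const)
  have hc : HasCompactSupport g₀ := χ.hasCompactSupport.smul_right
  obtain ⟨K, hK⟩ := ContDiff.lipschitzWith_of_hasCompactSupport hc hg₀ (by simp)
  refine ⟨fun z => g₀ z + e, e, K, hg₀.add contDiff_const, ?_, by simp [e], ?_, ?_⟩
  · refine LipschitzWith.of_dist_le_mul fun x y => ?_
    simpa using hK.dist_le_mul x y
  · intro z hz
    have : χ z = 0 := χ.zero_of_le_dist (by simpa using hz)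
    simp [g₀, this]
  · intro z hz
    have : χ z = 1 := χ.one_of_mem_closedBall (by rw [mem_closedBall_zero_iff]; exact hz)
    simp only [g₀, this, one_smul, sub_add_cancel]
    rfl

lemma gagliardo_lower {n ν : ℕ} {s p κ η R : ℝ} (hp : 0 ≤ p) (hκ : 0 < κ)
    (hs : 0 < (n : ℝ) + s * p)
    (u : EuclideanSpace ℝ (Fin n) → EuclideanSpace ℝ (Fin ν))
    (S : Set (EuclideanSpace ℝ (Fin n))) (hS : MeasurableSet S) (hSB : S ⊆ ball 0 1)
    (v : EuclideanSpace ℝ (Fin n))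
    (h : ∀ x ∈ S, ∀ z ∈ ball (x + v) η, z ∈ ball (0 : EuclideanSpace ℝ (Fin n)) 1 ∧
      κ ≤ ‖u z - u x‖ ∧ ‖z - x‖ ≤ R) :
    ENNReal.ofReal (κ ^ p / R ^ ((n : ℝ) + s * p)) *
      volume (ball (0 : EuclideanSpace ℝ (Fin n)) η) * volume S ≤
      gagliardoE s p (ball 0 1) u := by
  calc _ = ∫⁻ x in S, ENNReal.ofReal (κ ^ p / R ^ ((n : ℝ) + s * p)) *
        volume (ball (0 : EuclideanSpace ℝ (Fin n)) η) := by rw [setLIntegral_const]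
    _ ≤ ∫⁻ x in S, ∫⁻ y in ball (0 : EuclideanSpace ℝ (Fin n)) 1,
        ENNReal.ofReal (‖u y - u x‖ ^ p / ‖y - x‖ ^ ((n : ℝ) + s * p)) := by
        refine setLIntegral_mono' hS fun x hx => ?_
        calc _ = ∫⁻ y in ball (x + v) η, ENNReal.ofReal (κ ^ p / R ^ ((n : ℝ) + s * p)) := by
              rw [setLIntegral_const, Measure.addHaar_ball_center volume (x + v)]
          _ ≤ ∫⁻ y in ball (x + v) η,
              ENNReal.ofReal (‖u y - u x‖ ^ p / ‖y - x‖ ^ ((n : ℝ) + s * p)) := by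
              refine setLIntegral_mono' measurableSet_ball fun y hy => ?_
              obtain ⟨-, h1, h2⟩ := h x hx y hy
              apply ENNReal.ofReal_le_ofReal
              have hne : 0 < ‖y - x‖ := by
                rw [norm_pos_iff, sub_ne_zero]
                rintro rfl
                simp at h1; linarith
              gcongr
          _ ≤ _ := lintegral_mono_set fun y hy => (h x hx y hy).1
    _ ≤ _ := lintegral_mono_set hSB


lemma ext_lower {l q ν : ℕ} (hl : 1 ≤ l) (p : ℝ) (hp : p = (l : ℝ) + 1)
    {N W : Set (EuclideanSpace ℝ (Fin ν))} {b : EuclideanSpace ℝ (Fin ν)}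
    {ρ : EuclideanSpace ℝ (Fin ν) → EuclideanSpace ℝ (Fin ν)}
    (hW : IsOpen W) (hNW : N ⊆ W) (hρ : ContinuousOn ρ W) (hρN : MapsTo ρ W N)
    (hρid : ∀ y ∈ N, ρ y = y) (hb : b ∈ N)
    {f : EuclideanSpace ℝ (Fin l) → EuclideanSpace ℝ (Fin ν)}
    (hfb : ∀ x, 1 ≤ ‖x‖ → f x = b) (hf : ¬ NullHtpy N b f)
    {Λ ρ₀ : ℝ} (hΛ : 1 ≤ Λ) (hΛL : ∀ w, ‖LL l q w‖ ≤ Λ * ‖w‖)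
    (hρ₀ : 0 < ρ₀) (hρ₀1 : ρ₀ ≤ 1) (hρΛ : Λ * (2 * ρ₀) ≤ 1 / 2)
    {g : EuclideanSpace ℝ (Fin (l + q)) → EuclideanSpace ℝ (Fin l)}
    (hg : ∀ z, ‖z‖ ≤ 1 / 2 → g z = ((LL l q).symm z).1) :
    ∃ k : ℝ≥0∞, k ≠ 0 ∧ ∀ (ε : ℝ) (_ : 0 < ε) (_ : 2 * ε < ρ₀) (c : EuclideanSpace ℝ (Fin l))
      (_ : ‖c‖ ≤ ρ₀), k * ENNReal.ofReal (Real.log (ρ₀ / (2 * ε))) ≤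
        extEnergy p N (fun z => f (ε⁻¹ • (g z - c))) := by
  have hp0 : 0 ≤ p := by rw [hp]; positivity
  obtain ⟨C, hC, hlog⟩ := dome_log (ν := ν) hl p hp
  obtain ⟨κ, hκ0, hκt, hκ⟩ := LL_measure l q
  obtain ⟨δ, hδ, hδW⟩ := Metric.isOpen_iff.1 hW b (hNW hb)
  set D : ℝ≥0∞ := C * ENNReal.ofReal Λ ^ p with hD
  have hDt : D ≠ ⊤ := ENNReal.mul_ne_top hC (ENNReal.rpow_ne_top_of_nonneg hp0 (by simp))
  set vq : ℝ≥0∞ := volume (ball (0 : EuclideanSpace ℝ (Fin q)) ρ₀) with hvq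
  have hvq0 : vq ≠ 0 := (measure_ball_pos _ _ hρ₀).ne'
  refine ⟨κ * (ENNReal.ofReal δ ^ p * vq / D), ?_, ?_⟩
  · refine mul_ne_zero hκ0 (ENNReal.div_ne_zero.2 ⟨mul_ne_zero ?_ hvq0, hDt⟩)
    exact (ENNReal.rpow_pos (by simpa using hδ) (by simp)).ne'
  intro ε hε hερ c hc
  refine le_sInf ?_
  rintro _ ⟨U, ⟨O, hO, hOs, hU⟩, hUN, hU0, rfl⟩
  have hLn : ∀ x y, ‖x‖ ≤ ρ₀ → ‖y‖ ≤ ρ₀ → ‖LL l q (c + x, y)‖ ≤ 1 / 2 := by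
    intro x y hx hy
    refine (hΛL _).trans (le_trans ?_ hρΛ)
    gcongr
    rw [Prod.norm_mk]
    refine max_le ((norm_add_le _ _).trans (by linarith)) (by linarith)
  have hHm : Measurable (fun z => ‖fderiv ℝ U z‖ₑ ^ p) :=
    ((measurable_fderiv ℝ U).enorm).pow_const p
  set Φ : EuclideanSpace ℝ (Fin (l + q)) → ℝ≥0∞ :=
    fun z => ∫⁻ t in Ioo (0 : ℝ) 1, ‖fderiv ℝ U (z, t)‖ₑ ^ p with hΦ
  have hΦm : Measurable Φ := hHm.lintegral_prod_right'
  have hen : ∫⁻ z in ball (0 : EuclideanSpace ℝ (Fin (l + q))) 1 ×ˢ Ioo (0 : ℝ) 1,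
      ENNReal.ofReal (‖fderiv ℝ U z‖ ^ p) =
      ∫⁻ z, (ball (0 : EuclideanSpace ℝ (Fin (l + q))) 1).indicator Φ z := by
    have e1 : ∀ z, ENNReal.ofReal (‖fderiv ℝ U z‖ ^ p) = ‖fderiv ℝ U z‖ₑ ^ p := by
      intro z
      rw [← ENNReal.ofReal_rpow_of_nonneg (norm_nonneg _) hp0, ofReal_norm]
    simp_rw [e1]
    rw [lintegral_indicator measurableSet_ball, Measure.volume_eq_prod, ← Measure.prod_restrict,
      lintegral_prod _ hHm.aemeasurable]
  -- slice estimate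
  have hslice : ∀ y : EuclideanSpace ℝ (Fin q), ‖y‖ < ρ₀ →
      ENNReal.ofReal δ ^ p * ENNReal.ofReal (Real.log (ρ₀ / (2 * ε))) ≤
      D * ∫⁻ x in ball (0 : EuclideanSpace ℝ (Fin l)) ρ₀, Φ (LL l q (c + x, y)) := by
    intro y hy
    let A : EuclideanSpace ℝ (Fin l) × ℝ → EuclideanSpace ℝ (Fin (l + q)) × ℝ :=
      fun w => (LL l q (c + w.1, y), w.2)
    have hAL : LipschitzWith (Real.toNNReal Λ) A := by
      refine LipschitzWith.of_dist_le_mul fun w w' => ?_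
      rw [Real.coe_toNNReal _ (by linarith), dist_eq_norm, dist_eq_norm]
      have e : A w - A w' = (LL l q (w.1 - w'.1, 0), w.2 - w'.2) := by
        simp only [A, Prod.mk_sub_mk, ← map_sub]
        congr 3 <;> simp
      rw [e, Prod.norm_mk]
      have h1 := hΛL (w.1 - w'.1, 0)
      rw [Prod.norm_mk, norm_zero, max_eq_left (norm_nonneg _)] at h1
      have h2 : ‖w.1 - w'.1‖ ≤ ‖w - w'‖ := norm_fst_le (w - w')
      have h3 : ‖w.2 - w'.2‖ ≤ ‖w - w'‖ := norm_snd_le (w - w')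
      have h4 := norm_nonneg (w - w')
      refine max_le (h1.trans (by gcongr)) (h3.trans ?_)
      nlinarith
    have hAs : ContDiff ℝ 1 A := by
      refine ContDiff.prodMk ((LL l q).contDiff.comp ?_) contDiff_snd
      exact (contDiff_const.add contDiff_fst).prodMk contDiff_const
    have hAm : MapsTo A (closedBall 0 ρ₀ ×ˢ Icc (0 : ℝ) 1) (closedBall 0 1 ×ˢ Icc (0 : ℝ) 1) := by
      rintro ⟨x, t⟩ ⟨hx, ht⟩
      refine ⟨?_, ht⟩
      have := hLn x y (by simpa using hx) hy.le
      rw [mem_closedBall_zero_iff]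
      simp only [A]; linarith
    have h := hlog hNW hρ hρN hρid hb hδ hδW hfb hf hε hρ₀1 hερ (V := fun w => U (A w))
      (O := A ⁻¹' O) (hO.preimage hAs.continuous) (fun w hw => hOs (hAm hw))
      (hU.comp hAs.contDiffOn (fun w hw => hw)) (hUN.comp hAm)
      (fun x hx => by
        have hn := hLn x y hx hy.le
        simp only [A]
        rw [hU0 _ (by rw [mem_closedBall_zero_iff]; linarith)]
        beta_reduce
        rw [hg _ hn]
        simp)
    refine h.trans ?_
    rw [hD, mul_assoc]
    refine mul_le_mul_right ?_ _
    rw [← lintegral_const_mul]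
    swap
    · exact hΦm.comp (by fun_prop)
    refine setLIntegral_mono' measurableSet_ball fun x hx => ?_
    simp only [hΦ]
    rw [← lintegral_const_mul]
    swap
    · exact hHm.comp (by fun_prop)
    refine setLIntegral_mono' measurableSet_Ioo fun t ht => ?_
    rw [← ENNReal.mul_rpow_of_nonneg _ _ hp0]
    gcongr
    have hxO : A (x, t) ∈ O := hOs (hAm ⟨ball_subset_closedBall hx, Ioo_subset_Icc_self ht⟩)
    have hd : DifferentiableAt ℝ U (A (x, t)) :=
      (hU.contDiffAt (hO.mem_nhds hxO)).differentiableAt (by norm_num)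
    have hA' : DifferentiableAt ℝ A (x, t) := hAs.differentiable (by norm_num) _
    have e : fderiv ℝ (fun w => U (A w)) (x, t) =
        (fderiv ℝ U (A (x, t))).comp (fderiv ℝ A (x, t)) := fderiv_comp _ hd hA'
    rw [e, ← ofReal_norm, ← ofReal_norm, ← ENNReal.ofReal_mul (by linarith)]
    apply ENNReal.ofReal_le_ofReal
    refine (ContinuousLinearMap.opNorm_comp_le _ _).trans ?_
    rw [mul_comm]
    refine mul_le_mul_of_nonneg_right ?_ (norm_nonneg _)
    have := norm_fderiv_le_of_lipschitz ℝ hAL (x₀ := (x, t))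
    rwa [Real.coe_toNNReal _ (by linarith)] at this
  have hIm : Measurable ((ball (0 : EuclideanSpace ℝ (Fin (l + q))) 1).indicator Φ) :=
    hΦm.indicator measurableSet_ball
  rw [hen, hκ _ hIm]
  rw [mul_assoc]
  refine mul_le_mul_right ?_ _
  have hIntg : ENNReal.ofReal δ ^ p * ENNReal.ofReal (Real.log (ρ₀ / (2 * ε))) * vq ≤
      D * ∫⁻ y, ∫⁻ x, (ball (0 : EuclideanSpace ℝ (Fin (l + q))) 1).indicator Φ (LL l q (x, y)) := by
    calc _ = ∫⁻ y in ball (0 : EuclideanSpace ℝ (Fin q)) ρ₀,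
          ENNReal.ofReal δ ^ p * ENNReal.ofReal (Real.log (ρ₀ / (2 * ε))) := by
          rw [setLIntegral_const]
      _ ≤ ∫⁻ y in ball (0 : EuclideanSpace ℝ (Fin q)) ρ₀, D *
          ∫⁻ x, (ball (0 : EuclideanSpace ℝ (Fin (l + q))) 1).indicator Φ (LL l q (x, y)) := by
          refine setLIntegral_mono' measurableSet_ball fun y hy => ?_
          rw [mem_ball_zero_iff] at hy
          refine (hslice y hy).trans (mul_le_mul_right ?_ _)
          rw [← lintegral_add_left_eq_self (fun x =>
            (ball (0 : EuclideanSpace ℝ (Fin (l + q))) 1).indicator Φ (LL l q (x, y))) c]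
          refine le_trans ?_ (setLIntegral_le_lintegral (ball 0 ρ₀) _)
          refine setLIntegral_mono' measurableSet_ball fun x hx => ?_
          rw [mem_ball_zero_iff] at hx
          rw [indicator_of_mem]
          have := hLn x y hx.le hy.le
          rw [mem_ball_zero_iff]; linarith
      _ ≤ ∫⁻ y, D *
          ∫⁻ x, (ball (0 : EuclideanSpace ℝ (Fin (l + q))) 1).indicator Φ (LL l q (x, y)) :=
          setLIntegral_le_lintegral _ _
      _ = _ := lintegral_const_mul' _ _ hDt
  calc ENNReal.ofReal δ ^ p * vq / D * ENNReal.ofReal (Real.log (ρ₀ / (2 * ε))) =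
        (ENNReal.ofReal δ ^ p * ENNReal.ofReal (Real.log (ρ₀ / (2 * ε))) * vq) / D := by
        simp only [div_eq_mul_inv]; ring
    _ ≤ _ := ENNReal.div_le_of_le_mul' hIntg


lemma energy_lower {l q ν : ℕ} (hl : 1 ≤ l) (p : ℝ) (hp : p = (l : ℝ) + 1)
    {N : Set (EuclideanSpace ℝ (Fin ν))} {b : EuclideanSpace ℝ (Fin ν)} (hb : b ∈ N)
    {f : EuclideanSpace ℝ (Fin l) → EuclideanSpace ℝ (Fin ν)} (hfc : Continuous f)
    (hfb : ∀ x, 1 ≤ ‖x‖ → f x = b) (hf : ¬ NullHtpy N b f)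
    {Λ ρ₀ : ℝ} (hΛ : 1 ≤ Λ) (hΛL : ∀ w, ‖LL l q w‖ ≤ Λ * ‖w‖)
    (hΛL' : ∀ z, ‖(LL l q).symm z‖ ≤ Λ * ‖z‖)
    (hρ₀ : 0 < ρ₀) (hρΛ : Λ * (2 * ρ₀) ≤ 1 / 2)
    {e : EuclideanSpace ℝ (Fin l)} (he : ‖e‖ = 1)
    {g : EuclideanSpace ℝ (Fin (l + q)) → EuclideanSpace ℝ (Fin l)}
    (hg : ∀ z, ‖z‖ ≤ 1 / 2 → g z = ((LL l q).symm z).1) :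
    ∃ k : ℝ≥0∞, k ≠ 0 ∧ ∀ (ε : ℝ) (_ : 0 < ε) (_ : 8 * ε ≤ ρ₀) (c : EuclideanSpace ℝ (Fin l))
      (_ : ‖c‖ ≤ ρ₀), k ≤
        gagliardoE (1 - 1 / p) p (ball 0 1) (fun z => f (ε⁻¹ • (g z - c))) := by
  have hl1 : (1 : ℝ) ≤ l := by exact_mod_cast hl
  have hp0 : 0 < p := by linarith
  have hexp : ((l + q : ℕ) : ℝ) + (1 - 1 / p) * p = ((l + q + l : ℕ) : ℝ) := by
    have : (1 - 1 / p) * p = l := by field_simp; linarith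
    rw [this]; push_cast; ring
  obtain ⟨κ, hκ0, hκt, hκ⟩ := LL_measure l q
  obtain ⟨ζ, hζ⟩ : ∃ ζ, f ζ ≠ b := by
    by_contra hcon
    push Not at hcon
    exact hf ⟨0, fun _ => b, continuousOn_const, fun _ _ _ => hb, fun x => (hcon x).symm,
      fun _ => rfl, fun _ _ _ _ => rfl⟩
  have hζ1 : ‖ζ‖ < 1 := by
    by_contra h
    exact hζ (hfb ζ (not_lt.1 h))
  set a : ℝ := ‖f ζ - b‖ / 2 with ha
  have hfζ : 0 < ‖f ζ - b‖ := norm_pos_iff.2 (sub_ne_zero.2 hζ)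
  have ha0 : 0 < a := by positivity
  obtain ⟨d₀, hd₀, hd₀f⟩ : ∃ d > 0, ∀ x, ‖x - ζ‖ < d → a ≤ ‖f x - b‖ := by
    have hcont : ContinuousAt (fun x => ‖f x - b‖) ζ := by fun_prop
    have := hcont.eventually (lt_mem_nhds (show a < ‖f ζ - b‖ by linarith))
    obtain ⟨d, hd, h⟩ := Metric.eventually_nhds_iff.1 this
    exact ⟨d, hd, fun x hx => (h (by rwa [dist_eq_norm])).le⟩
  set d : ℝ := min d₀ 1 with hd
  have hd0 : 0 < d := lt_min hd₀ one_pos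
  have hd1 : d ≤ 1 := min_le_right _ _
  have hΛ0 : 0 < Λ := by linarith
  set ωl : ℝ≥0∞ := volume (ball (0 : EuclideanSpace ℝ (Fin l)) 1) with hωl
  set ωn : ℝ≥0∞ := volume (ball (0 : EuclideanSpace ℝ (Fin (l + q))) 1) with hωn
  set vq : ℝ≥0∞ := volume (ball (0 : EuclideanSpace ℝ (Fin q)) ρ₀) with hvq
  have hvq0 : vq ≠ 0 := (measure_ball_pos _ _ hρ₀).ne'
  have hωl0 : ωl ≠ 0 := (measure_ball_pos _ _ one_pos).ne'
  have hωn0 : ωn ≠ 0 := (measure_ball_pos _ _ one_pos).ne'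
  refine ⟨κ * vq * ωl * ωn *
    ENNReal.ofReal (a ^ p / (6 * Λ) ^ (l + q + l) * (Λ⁻¹) ^ (l + q) * d ^ l), ?_, ?_⟩
  · refine mul_ne_zero (mul_ne_zero (mul_ne_zero (mul_ne_zero hκ0 hvq0) hωl0) hωn0) ?_
    rw [Ne, ENNReal.ofReal_eq_zero, not_le]
    positivity
  intro ε hε hερ c hc
  set A : Set (EuclideanSpace ℝ (Fin l)) := ball (c + ε • ζ) (d * ε) with hA
  set S : Set (EuclideanSpace ℝ (Fin (l + q))) := (LL l q).symm ⁻¹' (A ×ˢ ball 0 ρ₀) with hS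
  have hSm : MeasurableSet S :=
    (measurableSet_ball.prod measurableSet_ball).preimage (LL l q).symm.continuous.measurable
  have hεζ : ‖ε • ζ‖ ≤ ε := by
    rw [norm_smul, Real.norm_of_nonneg hε.le]; nlinarith
  have hAc : ∀ x ∈ A, ‖x - c‖ ≤ 2 * ε ∧ ‖x‖ ≤ ρ₀ + 2 * ε := by
    intro x hx
    rw [hA, mem_ball_iff_norm] at hx
    have h1 : ‖x - c‖ ≤ 2 * ε := by
      have : x - c = (x - (c + ε • ζ)) + ε • ζ := by abel
      rw [this]
      refine (norm_add_le _ _).trans ?_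
      nlinarith
    refine ⟨h1, ?_⟩
    have : x = (x - c) + c := by abel
    rw [this]
    refine (norm_add_le _ _).trans ?_
    linarith
  have hnear : ∀ z : EuclideanSpace ℝ (Fin (l + q)), ‖(LL l q).symm z‖ ≤ 2 * ρ₀ → ‖z‖ ≤ 1 / 2 := by
    intro z hz
    have h1 := hΛL ((LL l q).symm z)
    rw [ContinuousLinearEquiv.apply_symm_apply] at h1
    refine h1.trans (le_trans ?_ hρΛ)
    gcongr
  have hSs : ∀ z ∈ S, ‖z‖ ≤ 1 / 2 := by
    intro z hz
    obtain ⟨h1, h2⟩ := hz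
    apply hnear
    rw [Prod.norm_def]
    rw [mem_ball_zero_iff] at h2
    exact max_le (by linarith [(hAc _ h1).2]) (by linarith)
  have hvS : κ * (vq * (ENNReal.ofReal ((d * ε) ^ l) * ωl)) ≤ volume S := by
    rw [← lintegral_indicator_one hSm, hκ _ (measurable_one.indicator hSm)]
    refine mul_le_mul_right ?_ _
    calc vq * (ENNReal.ofReal ((d * ε) ^ l) * ωl)
        = ∫⁻ y in ball (0 : EuclideanSpace ℝ (Fin q)) ρ₀, ∫⁻ x in A, 1 := by
          rw [setLIntegral_const, setLIntegral_const, one_mul, hA,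
            Measure.addHaar_ball_of_pos _ _ (by positivity), finrank_euclideanSpace_fin]
          ring
      _ ≤ ∫⁻ y in ball (0 : EuclideanSpace ℝ (Fin q)) ρ₀,
          ∫⁻ x, S.indicator 1 (LL l q (x, y)) := by
          refine setLIntegral_mono' measurableSet_ball fun y hy => ?_
          refine le_trans ?_ (setLIntegral_le_lintegral A _)
          refine setLIntegral_mono' measurableSet_ball fun x hx => ?_
          rw [indicator_of_mem]
          · simp
          · rw [hS, mem_preimage, ContinuousLinearEquiv.symm_apply_apply]
            exact ⟨hx, hy⟩
      _ ≤ _ := setLIntegral_le_lintegral _ _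
  have hLe : ‖LL l q (e, 0)‖ ≤ Λ := by
    have := hΛL (e, 0)
    rwa [Prod.norm_mk, norm_zero, he, max_eq_left zero_le_one, mul_one] at this
  have hlow := gagliardo_lower (s := 1 - 1 / p) (p := p) (κ := a) (η := Λ⁻¹ * ε)
    (R := 6 * Λ * ε) hp0.le ha0 (by rw [hexp]; positivity)
    (fun z => f (ε⁻¹ • (g z - c))) S hSm
    (fun z hz => by have := hSs z hz; rw [mem_ball_zero_iff]; linarith)
    ((5 * ε) • LL l q (e, 0))
    (fun x hx z hz => by
      have hx' := hx
      obtain ⟨h1, h2⟩ := hx'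
      rw [mem_ball_zero_iff] at h2
      rw [mem_ball_iff_norm] at hz
      set x' := (LL l q).symm x with hx'
      set z' := (LL l q).symm z with hz'
      have h3 : ‖z' - x' - ((5 * ε) • e, 0)‖ ≤ ε := by
        have : z' - x' - ((5 * ε) • e, 0) =
            (LL l q).symm (z - (x + (5 * ε) • LL l q (e, 0))) := by
          rw [map_sub, map_add, map_smul, ContinuousLinearEquiv.symm_apply_apply, ← hx', ← hz']
          simp only [Prod.smul_mk, smul_zero]
          abel
        rw [this]
        refine (hΛL' _).trans ?_
        calc Λ * ‖z - (x + (5 * ε) • LL l q (e, 0))‖ ≤ Λ * (Λ⁻¹ * ε) := by gcongr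
          _ = ε := by field_simp
      have h31 : ‖z'.1 - x'.1 - (5 * ε) • e‖ ≤ ε := (norm_fst_le _).trans h3
      have h32 : ‖z'.2 - x'.2‖ ≤ ε := by
        have := (norm_snd_le _).trans h3
        simpa using this
      have h5e : ‖(5 * ε) • e‖ = 5 * ε := by
        rw [norm_smul, he, mul_one, Real.norm_of_nonneg (by positivity)]
      obtain ⟨hAc1, hAc2⟩ := hAc _ h1
      have hd6 : ‖z'.1 - x'.1‖ ≤ 6 * ε := by
        have : z'.1 - x'.1 = (z'.1 - x'.1 - (5 * ε) • e) + (5 * ε) • e := by abel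
        rw [this]
        refine (norm_add_le _ _).trans ?_
        linarith
      have hz1 : ‖z'.1‖ ≤ 2 * ρ₀ := by
        have : z'.1 = (z'.1 - x'.1) + x'.1 := by abel
        rw [this]
        refine (norm_add_le _ _).trans ?_
        linarith
      have hz2 : ‖z'.2‖ ≤ 2 * ρ₀ := by
        have : z'.2 = (z'.2 - x'.2) + x'.2 := by abel
        rw [this]
        refine (norm_add_le _ _).trans ?_
        linarith
      have hzn : ‖z‖ ≤ 1 / 2 := hnear z (max_le hz1 hz2)
      have hzc : ε ≤ ‖z'.1 - c‖ := by
        have : (5 * ε) • e = (z'.1 - c) - (x'.1 - c) - (z'.1 - x'.1 - (5 * ε) • e) := by abel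
        have h7 : ‖(5 * ε) • e‖ ≤ ‖z'.1 - c‖ + ‖x'.1 - c‖ + ‖z'.1 - x'.1 - (5 * ε) • e‖ := by
          rw [this]
          refine (norm_sub_le _ _).trans ?_
          rw [← this]
          gcongr
          exact norm_sub_le _ _
        linarith
      refine ⟨by rw [mem_ball_zero_iff]; linarith, ?_, ?_⟩
      · have ez : f (ε⁻¹ • (g z - c)) = b := by
          apply hfb
          rw [hg z hzn, norm_smul, Real.norm_of_nonneg (by positivity), inv_mul_eq_div,
            one_le_div hε]
          exact hzc
        have ex : a ≤ ‖f (ε⁻¹ • (g x - c)) - b‖ := by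
          apply hd₀f
          rw [hg x (hSs x hx)]
          have : ε⁻¹ • (x'.1 - c) - ζ = ε⁻¹ • (x'.1 - (c + ε • ζ)) := by
            rw [← sub_sub, smul_sub _ (x'.1 - c), smul_smul, inv_mul_cancel₀ hε.ne', one_smul]
          rw [← hx', this, norm_smul, Real.norm_of_nonneg (by positivity), inv_mul_eq_div,
            div_lt_iff₀ hε]
          rw [hA, mem_ball_iff_norm] at h1
          refine h1.trans_le ?_
          gcongr
          exact min_le_left _ _
        beta_reduce
        rw [ez, norm_sub_rev]
        exact ex
      · have : z - x = LL l q (z' - x') := by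
          rw [map_sub, hz', hx', ContinuousLinearEquiv.apply_symm_apply,
            ContinuousLinearEquiv.apply_symm_apply]
        rw [this]
        refine (hΛL _).trans ?_
        have : ‖z' - x'‖ ≤ 6 * ε := max_le hd6 (by simpa using h32.trans (by linarith))
        calc Λ * ‖z' - x'‖ ≤ Λ * (6 * ε) := by gcongr
          _ = _ := by ring)
  refine le_trans ?_ (le_trans (mul_le_mul_right hvS _) hlow)
  rw [Measure.addHaar_ball_of_pos _ _ (by positivity), finrank_euclideanSpace_fin, hexp,
    Real.rpow_natCast, ← hωn]
  have hreal : a ^ p / (6 * Λ) ^ (l + q + l) * (Λ⁻¹) ^ (l + q) * d ^ l =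
      a ^ p / (6 * Λ * ε) ^ (l + q + l) * (Λ⁻¹ * ε) ^ (l + q) * (d * ε) ^ l := by
    rw [mul_pow (6 * Λ), mul_pow Λ⁻¹, mul_pow d, pow_add ε (l + q) l]
    field_simp
  rw [hreal, ENNReal.ofReal_mul (by positivity), ENNReal.ofReal_mul (by positivity)]
  apply le_of_eq
  ring

lemma energy_upper {l q ν : ℕ} (hl : 1 ≤ l) (p : ℝ) (hp : p = (l : ℝ) + 1)
    {N : Set (EuclideanSpace ℝ (Fin ν))} (hN : IsCompact N) {b : EuclideanSpace ℝ (Fin ν)}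
    {f : EuclideanSpace ℝ (Fin l) → EuclideanSpace ℝ (Fin ν)} (hfc : ContDiff ℝ (⊤ : ℕ∞) f)
    (hfN : ∀ x, f x ∈ N) (hfb : ∀ x, 1 ≤ ‖x‖ → f x = b) {ρ₀ : ℝ} (hρ₀ : 0 < ρ₀) {K : NNReal}
    {g : EuclideanSpace ℝ (Fin (l + q)) → EuclideanSpace ℝ (Fin l)} (hg : LipschitzWith K g) :
    ∃ C : ℝ≥0∞, C ≠ ⊤ ∧ ∀ (ε : ℝ) (_ : 0 < ε), ∃ c ∈ ball (0 : EuclideanSpace ℝ (Fin l)) ρ₀,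
        gagliardoE (1 - 1 / p) p (ball 0 1) (fun z => f (ε⁻¹ • (g z - c))) ≤ C := by
  have hl1 : (1 : ℝ) ≤ l := by exact_mod_cast hl
  have hp0 : 0 < p := by linarith
  obtain ⟨Kf, hKf⟩ : ∃ Kf : NNReal, LipschitzWith Kf f := by
    have hc : HasCompactSupport (fun x => f x - b) := by
      refine HasCompactSupport.intro (isCompact_closedBall 0 1) fun x hx => ?_
      rw [mem_closedBall_zero_iff, not_le] at hx
      rw [hfb x hx.le, sub_self]
    obtain ⟨Kf, hKf⟩ := ContDiff.lipschitzWith_of_hasCompactSupport hc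
      (hfc.sub contDiff_const) (by simp)
    refine ⟨Kf, LipschitzWith.of_dist_le_mul fun x y => ?_⟩
    simpa using hKf.dist_le_mul x y
  obtain ⟨C₁, hC₁, hpig⟩ := pigeonhole g hg.continuous hρ₀
  set D := Metric.diam N with hD
  set A : ℝ := Kf * K with hA
  have hfin := kernel_finite (n := l + q) (by omega) (t := l) (p := p) (D := D) (A := A)
    (by linarith) hp Metric.diam_nonneg (by positivity)
  set I := ∫⁻ h : EuclideanSpace ℝ (Fin (l + q)),
      ENNReal.ofReal (min D (A * ‖h‖) ^ p / ‖h‖ ^ (((l + q : ℕ) : ℝ) + l)) with hI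
  refine ⟨2 * C₁ * I, by finiteness, fun ε hε => ?_⟩
  obtain ⟨c, hc, hvol⟩ := hpig ε hε
  refine ⟨c, hc, ?_⟩
  have hup := gagliardo_upper (s := 1 - 1 / p) (t := l) (D := D) (A := A) hp0
    (by field_simp; linarith) hε (fun z => f (ε⁻¹ • (g z - c))) b {z | ‖g z - c‖ < ε}
    (isOpen_lt (by have := hg.continuous; fun_prop) continuous_const).measurableSet
    (fun x hx => by
      apply hfb
      rw [norm_smul, Real.norm_of_nonneg (by positivity), inv_mul_eq_div, one_le_div hε]
      exact not_lt.1 hx)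
    (fun x y => by
      rw [← dist_eq_norm]
      exact Metric.dist_le_diam_of_mem hN.isBounded (hfN _) (hfN _))
    (fun x y => by
      rw [← dist_eq_norm]
      refine (hKf.dist_le_mul _ _).trans ?_
      rw [dist_eq_norm, ← smul_sub, sub_sub_sub_cancel_right, norm_smul,
        Real.norm_of_nonneg (by positivity)]
      have h1 := hg.dist_le_mul y x
      rw [dist_eq_norm, dist_eq_norm] at h1
      calc (Kf : ℝ) * (ε⁻¹ * ‖g y - g x‖) ≤ Kf * (ε⁻¹ * (K * ‖y - x‖)) := by gcongr
        _ = A / ε * ‖y - x‖ := by rw [hA]; ring)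
  refine hup.trans ?_
  calc _ ≤ 2 * (C₁ * ENNReal.ofReal (ε ^ l)) * (ENNReal.ofReal (ε ^ (-(l : ℝ))) * I) := by
        gcongr
    _ = 2 * C₁ * I * (ENNReal.ofReal (ε ^ l) * ENNReal.ofReal (ε ^ (-(l : ℝ)))) := by ring
    _ = _ := by
        rw [← ENNReal.ofReal_mul (by positivity), Real.rpow_neg hε.le, Real.rpow_natCast,
          mul_inv_cancel₀ (by positivity), ENNReal.ofReal_one, mul_one]

/-- critical case `p = ℓ + 1`.  If `π_ℓ(N, b)` is nontrivial, there is a sequence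
of smooth maps `u_j : B̄^{m-1} → N`, equal to `b` on `S^{m-2}`, whose fractional energies stay
bounded away from `0` while the ratio `E^{1,p}_ext(u_j) / E^{1-1/p,p}(u_j)` tends to `∞`. -/
theorem statement1 (ν : ℕ) (hν : 1 ≤ ν) (N : Set (EuclideanSpace ℝ (Fin ν)))
    (hNcpt : IsCompact N) (hNconn : IsConnected N) (hNsub : IsSmoothSubmanifold N)
    (b : EuclideanSpace ℝ (Fin ν)) (hb : b ∈ N)
    (m : ℕ) (hm : 2 ≤ m) (l : ℕ) (hl : 1 ≤ l) (hlm : l ≤ m - 1)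
    (p : ℝ) (hp : p = (l : ℝ) + 1)
    (hπ : Nontrivial (HomotopyGroup (Fin l) ↥N ⟨b, hb⟩)) :
    ∃ u : ℕ → EuclideanSpace ℝ (Fin (m - 1)) → EuclideanSpace ℝ (Fin ν),
      (∀ j, SmoothOnNhd (u j) (closedBall 0 1)) ∧
      (∀ j, MapsTo (u j) (closedBall 0 1) N) ∧
      (∀ j, ∀ x ∈ sphere (0 : EuclideanSpace ℝ (Fin (m - 1))) 1, u j x = b) ∧
      0 < Filter.atTop.liminf (fun j => gagliardoE (1 - 1 / p) p (ball 0 1) (u j)) ∧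
      (∀ M : ℝ, 0 < M → ∃ J : ℕ, ∀ j, J ≤ j →
        ENNReal.ofReal M * gagliardoE (1 - 1 / p) p (ball 0 1) (u j)
          ≤ extEnergy p N (u j)) := by
  obtain ⟨q, hq⟩ := Nat.exists_eq_add_of_le hlm
  clear hlm
  generalize m - 1 = n at hq ⊢
  subst hq
  obtain ⟨W, ρ, hW, hNW, hρ, hρN, hρid⟩ := exists_retraction hNcpt hNsub
  obtain ⟨f, hfs, hfN, hfb, hf⟩ := exists_smooth_nontrivial hl hNcpt hb hW hNW hρ hρN hρid hπ
  obtain ⟨Λ, hΛ, hΛL, hΛL'⟩ := LL_bounds l q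
  obtain ⟨g, e, K, hgs, hgL, he, hge, hgZ⟩ := exists_g l q hl
  set ρ₀ : ℝ := 1 / (4 * Λ) with hρ₀def
  have hΛ0 : 0 < Λ := by linarith
  have hρ₀ : 0 < ρ₀ := by positivity
  have hρ₀4 : ρ₀ ≤ 1 / 4 := by
    rw [hρ₀def]
    gcongr
    linarith
  have hρΛ : Λ * (2 * ρ₀) ≤ 1 / 2 := by
    apply le_of_eq
    rw [hρ₀def]; field_simp; norm_num
  obtain ⟨C, hC, hup⟩ := energy_upper (q := q) hl p hp hNcpt hfs hfN hfb hρ₀ hgL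
  obtain ⟨k₁, hk₁, hlow⟩ := energy_lower (q := q) hl p hp hb hfs.continuous hfb hf hΛ hΛL hΛL'
    hρ₀ hρΛ he hgZ
  obtain ⟨k₂, hk₂, hext⟩ := ext_lower (q := q) hl p hp hW hNW hρ.continuousOn hρN hρid hb hfb hf hΛ
    hΛL hρ₀ (by linarith) hρΛ hgZ
  let ε : ℕ → ℝ := fun j => ρ₀ / (8 * ((j : ℝ) + 1))
  have hε : ∀ j, 0 < ε j := fun j => by simp only [ε]; positivity
  have hε8 : ∀ j, 8 * ε j ≤ ρ₀ := by
    intro j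
    have hj : (0 : ℝ) ≤ j := Nat.cast_nonneg j
    have : 8 * ε j = ρ₀ / ((j : ℝ) + 1) := by simp only [ε]; field_simp
    rw [this]
    exact div_le_self hρ₀.le (by linarith)
  choose c hcb hcE using fun j => hup (ε j) (hε j)
  have hc : ∀ j, ‖c j‖ ≤ ρ₀ := fun j => (mem_ball_zero_iff.1 (hcb j)).le
  refine ⟨fun j z => f ((ε j)⁻¹ • (g z - c j)), fun j => ?_, fun j z _ => hfN _, fun j z hz => ?_,
    ?_, fun M hM => ?_⟩
  · refine ⟨univ, isOpen_univ, subset_univ _, ContDiff.contDiffOn ?_⟩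
    exact hfs.comp (ContDiff.const_smul _ (hgs.sub contDiff_const))
  · rw [mem_sphere_zero_iff_norm] at hz
    apply hfb
    rw [hge z (by rw [hz]; norm_num), norm_smul,
      Real.norm_of_nonneg (inv_nonneg.2 (hε j).le), inv_mul_eq_div, one_le_div (hε j)]
    have h1 := norm_sub_norm_le e (c j)
    have h2 := hc j
    have h3 := hε8 j
    have h4 := hε j
    linarith
  · refine lt_of_lt_of_le (pos_iff_ne_zero.2 hk₁) ?_
    refine le_liminf_of_le (by isBoundedDefault) (Eventually.of_forall fun j => ?_)
    exact hlow (ε j) (hε j) (hε8 j) (c j) (hc j)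
  · have hlogt : Tendsto (fun j : ℕ => Real.log (ρ₀ / (2 * ε j))) atTop atTop := by
      refine Real.tendsto_log_atTop.comp ?_
      have : (fun j : ℕ => ρ₀ / (2 * ε j)) = fun j : ℕ => 4 * ((j : ℝ) + 1) := by
        ext j
        simp only [ε]
        field_simp
        norm_num
      rw [this]
      exact (tendsto_natCast_atTop_atTop.atTop_add tendsto_const_nhds).const_mul_atTop
        (by norm_num)
    have ht : Tendsto (fun j : ℕ => k₂ * ENNReal.ofReal (Real.log (ρ₀ / (2 * ε j)))) atTop
        (𝓝 ⊤) := by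
      have := ENNReal.Tendsto.const_mul (a := k₂) (ENNReal.tendsto_ofReal_nhds_top.2 hlogt)
        (Or.inl ENNReal.top_ne_zero)
      rwa [ENNReal.mul_top hk₂] at this
    have hfin : ENNReal.ofReal M * C < ⊤ := ENNReal.mul_lt_top ENNReal.ofReal_lt_top hC.lt_top
    obtain ⟨J, hJ⟩ := eventually_atTop.1 ((tendsto_order.1 ht).1 _ hfin)
    refine ⟨J, fun j hj => ?_⟩
    calc _ ≤ ENNReal.ofReal M * C := mul_le_mul_right (hcE j) _
      _ ≤ _ := (hJ j hj).le
      _ ≤ _ := hext (ε j) (hε j) (by linarith [hε8 j, hε j]) (c j) (hc j)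

end
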